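/- For every α > 0 there exist n₀ and g > 0 such that for all n ≥ n₀, every subset A ⊆ [n] with |A| ≥ α·n contains at least g·n² four-term arithmetic progressions, i.e. at least g·n² pairs (x, d) with d ≥ 1 such that x, x+d, x+2d, x+3d ∈ A. -/

import Mathlib

/-- The pairs `(x, d)` with `d ≥ 1` forming a 4-term arithmetic progression
`x, x+d, x+2d, x+3d` inside `A ⊆ [n]`. -/
def fourAPs (n : ℕ) (A : Finset ℕ) : Finset (ℕ × ℕ) :=
  (Finset.Icc 1 n ×ˢ Finset.Icc 1 n).filter
    (fun p => p.1 ∈ A ∧ p.1 + p.2 ∈ A ∧ p.1 + 2 * p.2 ∈ A ∧ p.1 + 3 * p.2 ∈ A)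

/-!
Write a pair `(a, d)` in a finite abelian group `G` as `a = -∑ i • x i`, `d = ∑ x i` with
`x : Fin 4 → G`. The term `a + e • d` does not involve `x e`, so `A ⊆ G` becomes a 4-partite
3-uniform hypergraph, with one set of faces for each `e`, whose tetrahedra are the progressions in
`A`. Those with `d = 0` already force a positive proportion of the faces to be deleted before no
tetrahedron is left, and the tetrahedron removal lemma then yields `≫ |G|²` progressions. Embedding
`[n]` in `ZMod (2 * n + 1)` creates no new progressions, and only `O(n)` of these have `d = 0`.

Removal rests on regularity at two levels. An energy increment colours the edges so that each face
event is pseudorandom relative to the edge colours, and then the vertices so that each edge colour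
is pseudorandom relative to the vertex colours, the first accuracy being small in terms of the
number of colours at both levels. Faces in sparse or irregular cells are few and are deleted; if a
tetrahedron survives, counting inside its cell produces a positive proportion of tetrahedra.
-/

namespace Varnavides

open Finset Function
open scoped BigOperators

section Probability

variable {Ω β β' : Type*}

/-- The Iverson bracket of a proposition, as a real number. -/
noncomputable def ind (P : Prop) : ℝ := open Classical in if P then 1 else 0

lemma ind_eq_ite (P : Prop) [Decidable P] : ind P = if P then 1 else 0 := by
  by_cases h : P <;> simp [ind, h]

lemma ind_of_true {P : Prop} (h : P) : ind P = 1 := if_pos h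

lemma ind_of_false {P : Prop} (h : ¬P) : ind P = 0 := if_neg h

lemma ind_mem_Icc (P : Prop) : ind P ∈ Set.Icc (0 : ℝ) 1 := by
  by_cases h : P <;> simp [ind, h]

lemma ind_nonneg (P : Prop) : 0 ≤ ind P := (ind_mem_Icc P).1

lemma ind_le_one (P : Prop) : ind P ≤ 1 := (ind_mem_Icc P).2

lemma ind_and (P Q : Prop) : ind (P ∧ Q) = ind P * ind Q := by
  by_cases hP : P <;> by_cases hQ : Q <;> simp [ind, hP, hQ]

lemma ind_mono {P Q : Prop} (h : P → Q) : ind P ≤ ind Q := by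
  by_cases hP : P
  · rw [ind_of_true hP, ind_of_true (h hP)]
  · exact (ind_of_false hP).trans_le (ind_nonneg Q)

lemma ind_exists_le_sum {ι : Type*} (s : Finset ι) (P : ι → Prop) :
    ind (∃ i ∈ s, P i) ≤ ∑ i ∈ s, ind (P i) := by
  by_cases h : ∃ i ∈ s, P i
  · obtain ⟨i, hi, hPi⟩ := h
    calc ind (∃ i ∈ s, P i) ≤ ind (P i) := (ind_le_one _).trans_eq (ind_of_true hPi).symm
      _ ≤ ∑ i ∈ s, ind (P i) := single_le_sum (fun i _ => ind_nonneg (P i)) hi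
  · exact (ind_of_false h).trans_le (sum_nonneg fun i _ => ind_nonneg (P i))

variable [Fintype Ω]

/-- The probability of the event `P` under the uniform distribution on the finite type `Ω`. -/
noncomputable def prob (P : Ω → Prop) : ℝ := 𝔼 x, ind (P x)

lemma prob_nonneg (P : Ω → Prop) : 0 ≤ prob P := expect_nonneg fun _ _ => ind_nonneg _

lemma prob_mono {P Q : Ω → Prop} (h : ∀ x, P x → Q x) : prob P ≤ prob Q :=
  expect_le_expect fun x _ => ind_mono (h x)

lemma prob_congr {P Q : Ω → Prop} (h : ∀ x, P x ↔ Q x) : prob P = prob Q :=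
  congrArg prob (funext fun x => propext (h x))

lemma prob_true [Nonempty Ω] : prob (fun _ : Ω => True) = 1 := by
  simp [prob, ind]

lemma prob_or_le (P Q : Ω → Prop) : prob (fun x => P x ∨ Q x) ≤ prob P + prob Q := by
  rw [prob, prob, prob, ← expect_add_distrib]
  refine expect_le_expect fun x _ => ?_
  by_cases hP : P x <;> by_cases hQ : Q x <;> simp [ind, hP, hQ]

lemma prob_exists_le {ι : Type*} (s : Finset ι) (P : ι → Ω → Prop) :
    prob (fun x => ∃ i ∈ s, P i x) ≤ ∑ i ∈ s, prob (P i) := by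
  simp only [prob]
  rw [← expect_sum_comm]
  exact expect_le_expect fun x _ => ind_exists_le_sum s _

lemma prob_eq_card_div (P : Ω → Prop) [DecidablePred P] :
    prob P = #{x | P x} / Fintype.card Ω := by
  simp only [prob, Fintype.expect_eq_sum_div_card, natCast_card_filter, ind_eq_ite]

lemma prob_lt_le_expect_div {F : Ω → ℝ} (hF : ∀ x, 0 ≤ F x) {t : ℝ} (ht : 0 < t) :
    prob (fun x => t < F x) ≤ (𝔼 x, F x) / t := by
  rw [expect_div]
  refine expect_le_expect fun x _ => ?_
  by_cases h : t < F x
  · rw [ind_of_true h, one_le_div ht]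
    exact h.le
  · rw [ind_of_false h]
    exact div_nonneg (hF x) ht.le

lemma prob_apply_color_le {q : Ω → ℕ} {M : ℕ} (hq : ∀ x, q x < M) {P : ℕ → Ω → Prop} {t : ℝ}
    (h : ∀ a < M, prob (fun x => q x = a ∧ P a x) ≤ t) : prob (fun x => P (q x) x) ≤ M * t :=
  calc prob (fun x => P (q x) x)
    _ ≤ prob (fun x => ∃ a ∈ range M, q x = a ∧ P a x) :=
      prob_mono fun x hx => ⟨q x, mem_range.2 (hq x), rfl, hx⟩
    _ ≤ ∑ a ∈ range M, prob (fun x => q x = a ∧ P a x) := prob_exists_le _ _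
    _ ≤ ∑ _a ∈ range M, t := sum_le_sum fun a ha => h a (mem_range.1 ha)
    _ = M * t := by simp

lemma prob_cell_lt_le {q : Ω → ℕ} {M : ℕ} (hq : ∀ x, q x < M) {t : ℝ} (ht : 0 ≤ t) :
    prob (fun x => prob (fun y => q y = q x) < t) ≤ M * t := by
  refine prob_apply_color_le (P := fun a _ => prob (fun y => q y = a) < t) hq fun a _ => ?_
  by_cases hsmall : prob (fun y => q y = a) < t
  · exact (prob_mono fun _ hx => hx.1).trans hsmall.le
  · simp only [hsmall, and_false]
    simpa [prob, ind] using ht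

lemma expect_abs_le_of_expect_sq_le [Nonempty Ω] {F : Ω → ℝ} {t : ℝ} (ht : 0 ≤ t)
    (h : 𝔼 x, F x ^ 2 ≤ t ^ 2) : 𝔼 x, |F x| ≤ t := by
  have cauchy_schwarz := expect_mul_sq_le_sq_mul_sq univ (fun x => |F x|) (fun _ => 1)
  simp only [mul_one, sq_abs, one_pow, Fintype.expect_const] at cauchy_schwarz
  exact le_of_sq_le_sq (cauchy_schwarz.trans h) ht

/-- The conditional expectation of `F` given the partition of `Ω` into the level sets of `q`. -/
noncomputable def condAvg (q : Ω → β) (F : Ω → ℝ) (x : Ω) : ℝ :=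
  open Classical in 𝔼 y with q y = q x, F y

lemma condAvg_factorsThrough (q : Ω → β) (F : Ω → ℝ) : (condAvg q F).FactorsThrough q :=
  fun x y h => by unfold condAvg; rw [h]

lemma condAvg_mem_Icc (q : Ω → β) {F : Ω → ℝ} (hF : ∀ x, F x ∈ Set.Icc (0 : ℝ) 1) (x : Ω) :
    condAvg q F x ∈ Set.Icc (0 : ℝ) 1 :=
  ⟨expect_nonneg fun y _ => (hF y).1, expect_le ⟨x, by simp⟩ fun y _ => (hF y).2⟩

lemma condAvg_nonneg (q : Ω → β) {F : Ω → ℝ} (hF : ∀ x, 0 ≤ F x) (x : Ω) : 0 ≤ condAvg q F x :=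
  expect_nonneg fun y _ => hF y

lemma expect_mul_ind_cell (q : Ω → β) (F : Ω → ℝ) (x : Ω) :
    𝔼 y, F y * ind (q y = q x) = condAvg q F x * prob (fun y => q y = q x) := by
  classical
  have hcell : (#{y | q y = q x} : ℝ) ≠ 0 := by
    exact_mod_cast (card_pos.2 ⟨x, by simp⟩).ne'
  rw [prob_eq_card_div, Fintype.expect_eq_sum_div_card, condAvg, expect_eq_sum_div_card]
  rw [div_mul_div_cancel₀ hcell, sum_filter]
  simp only [ind_eq_ite, mul_ite, mul_one, mul_zero]

lemma expect_condAvg_mul (q : Ω → β) (F : Ω → ℝ) {w : Ω → ℝ} (hw : w.FactorsThrough q) :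
    𝔼 x, condAvg q F x * w x = 𝔼 x, F x * w x := by
  classical
  have hsum (x : Ω) :
      condAvg q F x * w x = ∑ y, if q y = q x then F y * w y / #{z | q z = q y} else 0 := by
    rw [condAvg, expect_eq_sum_div_card, div_mul_eq_mul_div, sum_mul, sum_div, ← sum_filter]
    refine sum_congr rfl fun y hy => ?_
    have hyx : q y = q x := by simpa using hy
    rw [hyx, hw hyx]
  have hcell (y : Ω) : (#{z | q z = q y} : ℝ) ≠ 0 := by
    exact_mod_cast (card_pos.2 ⟨y, by simp⟩).ne'
  simp only [Fintype.expect_eq_sum_div_card, hsum]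
  rw [sum_comm]
  congr 1
  refine sum_congr rfl fun y _ => ?_
  rw [← sum_filter, sum_const, nsmul_eq_mul]
  simp only [eq_comm (a := q y)]
  exact mul_div_cancel₀ _ (hcell y)

lemma expect_condAvg (q : Ω → β) (F : Ω → ℝ) : 𝔼 x, condAvg q F x = 𝔼 x, F x := by
  simpa using expect_condAvg_mul q F (w := fun _ => 1) fun _ _ _ => rfl

lemma prob_lt_condAvg_le (q : Ω → β) {F : Ω → ℝ} (hF : ∀ x, 0 ≤ F x) {t : ℝ} (ht : 0 < t) :
    prob (fun x => t < condAvg q F x) ≤ (𝔼 x, F x) / t :=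
  (prob_lt_le_expect_div (condAvg_nonneg q hF) ht).trans_eq (by rw [expect_condAvg])

lemma prob_and_condAvg_lt_le [Nonempty Ω] (q : Ω → β) (P : Ω → Prop) {t : ℝ} (ht : 0 ≤ t) :
    prob (fun x => P x ∧ condAvg q (fun y => ind (P y)) x < t) ≤ t := by
  set F : Ω → ℝ := fun y => ind (P y)
  have hlow : (fun x => ind (condAvg q F x < t)).FactorsThrough q :=
    fun x y h => by simp only [condAvg_factorsThrough q F h]
  simp only [prob, ind_and]
  rw [← expect_condAvg_mul q F hlow]
  refine expect_le univ_nonempty fun x _ => ?_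
  by_cases h : condAvg q F x < t
  · simpa [ind_of_true h] using h.le
  · simpa [ind_of_false h] using ht

/-- The energy (or index) of the partition into level sets of `q`, relative to `F`. -/
noncomputable def energy (q : Ω → β) (F : Ω → ℝ) : ℝ := 𝔼 x, condAvg q F x ^ 2

lemma energy_nonneg (q : Ω → β) (F : Ω → ℝ) : 0 ≤ energy q F :=
  expect_nonneg fun _ _ => sq_nonneg _

lemma energy_le_one [Nonempty Ω] (q : Ω → β) {F : Ω → ℝ} (hF : ∀ x, F x ∈ Set.Icc (0 : ℝ) 1) :
    energy q F ≤ 1 :=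
  expect_le univ_nonempty fun x _ =>
    pow_le_one₀ (condAvg_mem_Icc q hF x).1 (condAvg_mem_Icc q hF x).2

lemma expect_sq_condAvg_sub_condAvg {q : Ω → β} {q' : Ω → β'} (h : q.FactorsThrough q')
    (F : Ω → ℝ) :
    𝔼 x, (condAvg q' F x - condAvg q F x) ^ 2 = energy q' F - energy q F := by
  have hcoarse : (condAvg q F).FactorsThrough q := condAvg_factorsThrough q F
  have hcross : 𝔼 x, condAvg q' F x * condAvg q F x = energy q F := by
    rw [expect_condAvg_mul q' F fun x y hxy => hcoarse (h hxy), ← expect_condAvg_mul q F hcoarse]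
    simp only [energy, sq]
  calc 𝔼 x, (condAvg q' F x - condAvg q F x) ^ 2
    _ = 𝔼 x, (condAvg q' F x ^ 2 - 2 * (condAvg q' F x * condAvg q F x) + condAvg q F x ^ 2) := by
      congr 1 with x
      ring
    _ = energy q' F - 2 * energy q F + energy q F := by
      rw [expect_add_distrib, expect_sub_distrib, ← mul_expect, hcross, energy, energy]
    _ = energy q' F - energy q F := by ring

lemma energy_mono {q : Ω → β} {q' : Ω → β'} (h : q.FactorsThrough q') (F : Ω → ℝ) :
    energy q F ≤ energy q' F := by
  rw [← sub_nonneg, ← expect_sq_condAvg_sub_condAvg h]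
  exact expect_nonneg fun _ _ => sq_nonneg _

lemma sq_expect_sub_condAvg_mul_le [Nonempty Ω] {q : Ω → β} {q' : Ω → β'}
    (h : q.FactorsThrough q') (F : Ω → ℝ) {T : Ω → ℝ} (hT : T.FactorsThrough q')
    (hT01 : ∀ x, T x ∈ Set.Icc (0 : ℝ) 1) :
    (𝔼 x, (F x - condAvg q F x) * T x) ^ 2 ≤ energy q' F - energy q F := by
  have hproject : 𝔼 x, (F x - condAvg q F x) * T x
      = 𝔼 x, (condAvg q' F x - condAvg q F x) * T x := by
    simp only [sub_mul, expect_sub_distrib, expect_condAvg_mul q' F hT]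
  rw [hproject, ← expect_sq_condAvg_sub_condAvg h]
  refine (expect_mul_sq_le_sq_mul_sq _ _ _).trans ?_
  refine mul_le_of_le_one_right (expect_nonneg fun _ _ => sq_nonneg _) ?_
  exact expect_le univ_nonempty fun x _ => pow_le_one₀ (hT01 x).1 (hT01 x).2

end Probability

section Regularity

variable {Ω ι κ τ : Type*} {γ : ι → Type*}

/-- Each `f s` is a function of the corresponding `π s`. For colourings this expresses both
measurability with respect to the projections `π` and refinement of one colouring by another. -/
def FamilyFactorsThrough (f : ι → Ω → τ) (π : ∀ s, Ω → γ s) : Prop :=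
  ∀ s, (f s).FactorsThrough (π s)

/-- A family of colourings with colours in `{0, …, M - 1}`, the `s`-th one of which only sees the
projection `π s`. -/
structure IsColoring (π : ∀ s, Ω → γ s) (M : ℕ) (c : ι → Ω → ℕ) : Prop where
  lt : ∀ s x, c s x < M
  factorsThrough : FamilyFactorsThrough c π

/-- The common refinement of the colourings indexed by `A`. -/
def joint (A : Finset ι) (c : ι → Ω → τ) (x : Ω) : A → τ := fun s => c s x

lemma joint_eq_iff {A : Finset ι} {c : ι → Ω → τ} {x y : Ω} :
    joint A c x = joint A c y ↔ ∀ s ∈ A, c s x = c s y := by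
  simp only [joint, funext_iff, Subtype.forall]

lemma FamilyFactorsThrough.joint {c c' : ι → Ω → ℕ} (h : FamilyFactorsThrough c c')
    (A : Finset ι) : (joint A c).FactorsThrough (joint A c') := fun _ _ hxy =>
  joint_eq_iff.2 fun s hs => h s (joint_eq_iff.1 hxy s hs)

open Classical in
/-- The colouring `c` refined by a family `U` of events. -/
noncomputable def refineBy (c : ι → Ω → ℕ) (U : ι → Ω → Prop) (s : ι) (x : Ω) : ℕ :=
  2 * c s x + if U s x then 1 else 0

lemma refineBy_eq_iff {c : ι → Ω → ℕ} {U : ι → Ω → Prop} {s : ι} {x y : Ω} :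
    refineBy c U s x = refineBy c U s y ↔ c s x = c s y ∧ (U s x ↔ U s y) := by
  unfold refineBy
  by_cases hx : U s x <;> by_cases hy : U s y <;> simp [hx, hy] <;> omega

lemma familyFactorsThrough_refineBy (c : ι → Ω → ℕ) (U : ι → Ω → Prop) :
    FamilyFactorsThrough c (refineBy c U) := fun _ _ _ h => (refineBy_eq_iff.1 h).1

lemma IsColoring.refineBy {π : ∀ s, Ω → γ s} {M : ℕ} {c : ι → Ω → ℕ} (hc : IsColoring π M c)
    {U : ι → Ω → Prop} (hU : FamilyFactorsThrough U π) :
    IsColoring π (2 * M) (refineBy c U) where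
  lt s x := by
    have := hc.lt s x
    unfold Varnavides.refineBy
    split_ifs <;> omega
  factorsThrough s _ _ h := refineBy_eq_iff.2 ⟨hc.factorsThrough s h, (hU s h).to_iff⟩

variable [Fintype Ω]

/-- `p` has correlation at most `δ` with every intersection over `A` of events that only see the
projections `π s`. -/
def IsPseudorandom (π : ∀ s, Ω → γ s) (A : Finset ι) (p : Ω → ℝ) (δ : ℝ) : Prop :=
  ∀ U : ι → Ω → Prop, FamilyFactorsThrough U π → |𝔼 x, p x * ind (∀ s ∈ A, U s x)| ≤ δ

lemma exists_energy_joint_add_sq_le [Nonempty Ω] {π : ∀ s, Ω → γ s} {A : Finset ι} {F : Ω → ℝ}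
    {M : ℕ} {c : ι → Ω → ℕ} (hc : IsColoring π M c) {δ : ℝ} (hδ : 0 ≤ δ)
    (hF : ¬ IsPseudorandom π A (fun x => F x - condAvg (joint A c) F x) δ) :
    ∃ c', IsColoring π (2 * M) c' ∧ FamilyFactorsThrough c c' ∧
      energy (joint A c) F + δ ^ 2 ≤ energy (joint A c') F := by
  simp only [IsPseudorandom, not_forall, not_le] at hF
  obtain ⟨U, hU, hcorr⟩ := hF
  have hrefines := familyFactorsThrough_refineBy c U
  have hfactors : (fun x => ind (∀ s ∈ A, U s x)).FactorsThrough (joint A (refineBy c U)) := by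
    intro x y hxy
    have hiff (s) (hs : s ∈ A) := (refineBy_eq_iff.1 (joint_eq_iff.1 hxy s hs)).2
    exact congrArg ind (propext (forall₂_congr hiff))
  refine ⟨refineBy c U, hc.refineBy hU, hrefines, ?_⟩
  rw [← le_sub_iff_add_le']
  calc δ ^ 2 ≤ |𝔼 x, (F x - condAvg (joint A c) F x) * ind (∀ s ∈ A, U s x)| ^ 2 :=
      pow_le_pow_left₀ hδ hcorr.le 2
    _ ≤ energy (joint A (refineBy c U)) F - energy (joint A c) F := by
      rw [sq_abs]
      exact sq_expect_sub_condAvg_mul_le (hrefines.joint A) F hfactors fun x => ind_mem_Icc _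

/-- The output of the regularity lemma: a colouring `c` with `M` colours and a refinement `c'`
relative to which each `f k` is `δ`-pseudorandom, while conditioning on `c'` instead of `c`
changes each `f k` by at most `ε` in mean square. -/
structure IsRegularPair (π : ∀ s, Ω → γ s) (S : κ → Finset ι) (f : κ → Ω → ℝ) (ε δ : ℝ) (M : ℕ)
    (c c' : ι → Ω → ℕ) : Prop where
  coarse : IsColoring π M c
  fine_factorsThrough : FamilyFactorsThrough c' π
  isPseudorandom :
    ∀ k, IsPseudorandom π (S k) (fun x => f k x - condAvg (joint (S k) c') (f k) x) δ
  expect_sq_le :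
    ∀ k, 𝔼 x, (condAvg (joint (S k) c') (f k) x - condAvg (joint (S k) c) (f k) x) ^ 2 ≤ ε

variable [Fintype κ]

/-- The sum of the energies of the functions `f k` relative to the joint colourings over `S k`,
the quantity that increases along the regularity iterations. -/
noncomputable def totalEnergy (S : κ → Finset ι) (f : κ → Ω → ℝ) (c : ι → Ω → ℕ) : ℝ :=
  ∑ k, energy (joint (S k) c) (f k)

variable {S : κ → Finset ι} {f : κ → Ω → ℝ} {c c' : ι → Ω → ℕ}

lemma totalEnergy_nonneg : 0 ≤ totalEnergy S f c := sum_nonneg fun _ _ => energy_nonneg _ _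

lemma totalEnergy_le_card [Nonempty Ω] (hf : ∀ k x, f k x ∈ Set.Icc (0 : ℝ) 1) :
    totalEnergy S f c ≤ Fintype.card κ := by
  simpa [totalEnergy] using sum_le_sum fun k (_ : k ∈ univ) => energy_le_one (joint (S k) c) (hf k)

lemma energy_sub_le_totalEnergy_sub (h : FamilyFactorsThrough c c') (k : κ) :
    energy (joint (S k) c') (f k) - energy (joint (S k) c) (f k) ≤
      totalEnergy S f c' - totalEnergy S f c := by
  rw [totalEnergy, totalEnergy, ← sum_sub_distrib]
  exact single_le_sum (f := fun k => energy (joint (S k) c') (f k) - energy (joint (S k) c) (f k))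
    (fun k _ => sub_nonneg.2 (energy_mono (h.joint (S k)) (f k))) (mem_univ k)

lemma exists_refinement_isPseudorandom [Nonempty Ω] {π : ∀ s, Ω → γ s}
    (hf : ∀ k x, f k x ∈ Set.Icc (0 : ℝ) 1) {δ : ℝ} (hδ : 0 < δ) (t : ℕ) {M : ℕ}
    (hc : IsColoring π M c) (hslack : Fintype.card κ ≤ totalEnergy S f c + t * δ ^ 2) :
    ∃ c', IsColoring π (2 ^ t * M) c' ∧ FamilyFactorsThrough c c' ∧
      ∀ k, IsPseudorandom π (S k) (fun x => f k x - condAvg (joint (S k) c') (f k) x) δ := by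
  induction t generalizing c M with
  | zero =>
    refine ⟨c, by simpa using hc, fun s x y h => h, ?_⟩
    by_contra! hnot
    obtain ⟨k, hk⟩ := hnot
    obtain ⟨c', -, hcc', hincr⟩ := exists_energy_joint_add_sq_le hc hδ.le hk
    have hincr_total := energy_sub_le_totalEnergy_sub (S := S) (f := f) hcc' k
    have hbound := totalEnergy_le_card (S := S) (c := c') hf
    have := pow_pos hδ 2
    simp only [Nat.cast_zero, zero_mul, add_zero] at hslack
    linarith
  | succ t ih =>
    by_cases hpseudo :
        ∀ k, IsPseudorandom π (S k) (fun x => f k x - condAvg (joint (S k) c) (f k) x) δ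
    · refine ⟨c, ⟨fun s x => (hc.lt s x).trans_le ?_, hc.factorsThrough⟩, fun s x y h => h, hpseudo⟩
      exact Nat.le_mul_of_pos_left M (by positivity)
    · push Not at hpseudo
      obtain ⟨k, hk⟩ := hpseudo
      obtain ⟨c₁, hc₁, hcc₁, hincr⟩ := exists_energy_joint_add_sq_le hc hδ.le hk
      have hincr_total := energy_sub_le_totalEnergy_sub (S := S) (f := f) hcc₁ k
      push_cast at hslack
      obtain ⟨c₂, hc₂, hc₁₂, hpseudo₂⟩ := ih hc₁ (by linarith)
      refine ⟨c₂, ?_, fun s x y h => hcc₁ s (hc₁₂ s h), hpseudo₂⟩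
      rwa [pow_succ, mul_assoc]

lemma isRegularPair_of_totalEnergy_le {π : ∀ s, Ω → γ s} {ε δ : ℝ} {M N : ℕ}
    (hc : IsColoring π M c) (hc' : IsColoring π N c') (hcc' : FamilyFactorsThrough c c')
    (hpseudo : ∀ k, IsPseudorandom π (S k) (fun x => f k x - condAvg (joint (S k) c') (f k) x) δ)
    (henergy : totalEnergy S f c' ≤ totalEnergy S f c + ε) : IsRegularPair π S f ε δ M c c' where
  coarse := hc
  fine_factorsThrough := hc'.factorsThrough
  isPseudorandom := hpseudo
  expect_sq_le k := by
    rw [expect_sq_condAvg_sub_condAvg (hcc'.joint (S k))]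
    linarith [energy_sub_le_totalEnergy_sub (S := S) (f := f) hcc' k]

end Regularity

section StrongRegularity

universe u v

variable {ι κ : Type*}

lemma exists_isRegularPair_of_slack [Fintype κ] (S : κ → Finset ι) {ε : ℝ} (hε : 0 < ε) {δ : ℕ → ℝ}
    (hδ : ∀ M, 0 < δ M) (t M : ℕ) :
    ∃ B : ℕ, ∀ (Ω : Type u) [Fintype Ω] [Nonempty Ω] (γ : ι → Type v) (π : ∀ s, Ω → γ s)
      (f : κ → Ω → ℝ), (∀ k x, f k x ∈ Set.Icc (0 : ℝ) 1) → ∀ c : ι → Ω → ℕ, IsColoring π M c →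
      Fintype.card κ ≤ totalEnergy S f c + t * ε →
      ∃ c c' M, M ≤ B ∧ IsRegularPair π S f ε (δ M) M c c' := by
  induction t generalizing M with
  | zero =>
    obtain ⟨n, hn⟩ := exists_nat_ge (Fintype.card κ / δ M ^ 2)
    refine ⟨M, fun Ω _ _ γ π f hf c hc hslack => ?_⟩
    rw [div_le_iff₀ (pow_pos (hδ M) 2)] at hn
    obtain ⟨c', hc', hcc', hpseudo⟩ := exists_refinement_isPseudorandom (S := S) hf (hδ M) n hc
      (hn.trans (le_add_of_nonneg_left totalEnergy_nonneg))
    refine ⟨c, c', M, le_rfl, isRegularPair_of_totalEnergy_le hc hc' hcc' hpseudo ?_⟩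
    have hbound := totalEnergy_le_card (S := S) (c := c') hf
    simp only [Nat.cast_zero, zero_mul, add_zero] at hslack
    linarith
  | succ t ih =>
    obtain ⟨n, hn⟩ := exists_nat_ge (Fintype.card κ / δ M ^ 2)
    obtain ⟨B, hB⟩ := ih (2 ^ n * M)
    refine ⟨max M B, fun Ω _ _ γ π f hf c hc hslack => ?_⟩
    rw [div_le_iff₀ (pow_pos (hδ M) 2)] at hn
    obtain ⟨c', hc', hcc', hpseudo⟩ := exists_refinement_isPseudorandom (S := S) hf (hδ M) n hc
      (hn.trans (le_add_of_nonneg_left totalEnergy_nonneg))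
    by_cases henergy : totalEnergy S f c' ≤ totalEnergy S f c + ε
    · exact ⟨c, c', M, le_max_left _ _,
        isRegularPair_of_totalEnergy_le hc hc' hcc' hpseudo henergy⟩
    · push_cast at hslack
      obtain ⟨d, d', M', hM', hpair⟩ := hB Ω γ π f hf c' hc' (by linarith)
      exact ⟨d, d', M', hM'.trans (le_max_right _ _), hpair⟩

lemma exists_isRegularPair [Finite κ] (S : κ → Finset ι) {ε : ℝ} (hε : 0 < ε) {δ : ℕ → ℝ}
    (hδ : ∀ M, 0 < δ M) :
    ∃ B : ℕ, ∀ (Ω : Type u) [Fintype Ω] [Nonempty Ω] (γ : ι → Type v) (π : ∀ s, Ω → γ s)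
      (f : κ → Ω → ℝ), (∀ k x, f k x ∈ Set.Icc (0 : ℝ) 1) →
      ∃ c c' M, M ≤ B ∧ IsRegularPair π S f ε (δ M) M c c' := by
  cases nonempty_fintype κ
  obtain ⟨t, ht⟩ := exists_nat_ge (Fintype.card κ / ε)
  obtain ⟨B, hB⟩ := exists_isRegularPair_of_slack S hε hδ t 1
  rw [div_le_iff₀ hε] at ht
  refine ⟨B, fun Ω _ _ γ π f hf => hB Ω γ π f hf (fun _ _ => 0) ⟨fun _ _ => one_pos, ?_⟩ ?_⟩
  · exact fun _ _ _ _ => rfl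
  · exact ht.trans (le_add_of_nonneg_left totalEnergy_nonneg)

end StrongRegularity

section Product

variable {I : Type*} {V : I → Type*} {β : Type*}

/-- The projection of a point of a product onto the coordinates in `s`. -/
def coords (s : Finset I) (x : ∀ i, V i) (i : s) : V i := x i

lemma coords_eq_iff {s : Finset I} {x y : ∀ i, V i} :
    coords s x = coords s y ↔ ∀ i ∈ s, x i = y i := by
  simp only [coords, funext_iff, Subtype.forall]

lemma familyFactorsThrough_coords_iff {f : Finset I → (∀ i, V i) → β} :
    FamilyFactorsThrough f coords ↔ ∀ s, DependsOn (f s) s := by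
  simp only [FamilyFactorsThrough, FactorsThrough, DependsOn, coords_eq_iff, mem_coe]

lemma dependsOn_joint {ι : Type*} {A : Finset ι} {c : ι → (∀ i, V i) → β} {t : Set I}
    (h : ∀ s ∈ A, DependsOn (c s) t) : DependsOn (joint A c) t :=
  fun _ _ hxy => joint_eq_iff.2 fun s hs => h s hs hxy

lemma dependsOn_of_factorsThrough {τ : Type*} {q : (∀ i, V i) → β} {F : (∀ i, V i) → τ}
    {t : Set I} (hF : F.FactorsThrough q) (hq : DependsOn q t) : DependsOn F t :=
  fun _ _ hxy => hF (hq hxy)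

lemma dependsOn_and {P Q : (∀ i, V i) → Prop} {t : Set I} (hP : DependsOn P t)
    (hQ : DependsOn Q t) : DependsOn (fun x => P x ∧ Q x) t :=
  fun _ _ hxy => congrArg₂ And (hP hxy) (hQ hxy)

lemma dependsOn_forall_mem {ι : Type*} {A : Finset ι} {P : ι → (∀ i, V i) → Prop} {t : Set I}
    (h : ∀ s ∈ A, DependsOn (P s) t) : DependsOn (fun x => ∀ s ∈ A, P s x) t :=
  fun _ _ hxy => propext (forall₂_congr fun s hs => (h s hs hxy).to_iff)

/-- The event `Y` is an intersection of events `Z i`, for `i ∈ s`, such that `Z i` does not see the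
coordinate `i`; with the other coordinates fixed, these are the events that a function
pseudorandom relative to `boundary s` cannot correlate with. -/
def SplitsOver (s : Finset I) (Y : (∀ i, V i) → Prop) : Prop :=
  ∃ Z : I → (∀ i, V i) → Prop, (∀ i ∈ s, DependsOn (Z i) {i}ᶜ) ∧ ∀ x, Y x ↔ ∀ i ∈ s, Z i x

lemma splitsOver_forall_mem {ι : Type*} {s : Finset I} {A : Finset ι} {Y : ι → (∀ i, V i) → Prop}
    (h : ∀ a ∈ A, SplitsOver s (Y a)) : SplitsOver s (fun x => ∀ a ∈ A, Y a x) := by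
  choose! Z hZ hYZ using h
  refine ⟨fun i x => ∀ a ∈ A, Z a i x, fun i hi => dependsOn_forall_mem fun a ha => hZ a ha i hi,
    fun x => (forall₂_congr fun a ha => hYZ a ha x).trans ?_⟩
  exact ⟨fun h i hi a ha => h a ha i hi, fun h a ha i hi => h i hi a ha⟩

lemma SplitsOver.and {s : Finset I} {Y Y' : (∀ i, V i) → Prop} (h : SplitsOver s Y)
    (h' : SplitsOver s Y') : SplitsOver s (fun x => Y x ∧ Y' x) := by
  obtain ⟨Z, hZ, hYZ⟩ := h
  obtain ⟨Z', hZ', hYZ'⟩ := h'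
  exact ⟨fun i x => Z i x ∧ Z' i x, fun i hi => dependsOn_and (hZ i hi) (hZ' i hi),
    fun x => ((hYZ x).and (hYZ' x)).trans forall₂_and.symm⟩

lemma splitsOver_of_dependsOn {s : Finset I} {t : Set I} {Y : (∀ i, V i) → Prop}
    (hY : DependsOn Y t) {i : I} (hi : i ∈ s) (hit : i ∉ t) : SplitsOver s Y := by
  refine ⟨fun j x => j = i → Y x, fun j _ x y hxy => ?_, fun x => ?_⟩
  · refine forall_congr fun (hji : j = i) => hY fun k hk => hxy k ?_
    rintro rfl
    exact hit (hji ▸ hk)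
  · exact ⟨fun hx _ _ _ => hx, fun h => h i hi rfl⟩

lemma splitsOver_of_isAntichain {J : Set (Finset I)} (hJ : IsAntichain (· ⊆ ·) J) {s t : Finset I}
    (hs : s ∈ J) (ht : t ∈ J) (hst : s ≠ t) {Y : (∀ i, V i) → Prop} (hY : DependsOn Y t) :
    SplitsOver s Y := by
  obtain ⟨i, his, hit⟩ := not_subset.1 (hJ hs ht hst)
  exact splitsOver_of_dependsOn hY his hit

variable [DecidableEq I]

lemma dependsOn_piecewise_left {s : Finset I} {F : (∀ i, V i) → β} {t : Set I}
    (hF : DependsOn F t) (z : ∀ i, V i) : DependsOn (fun x => F (s.piecewise x z)) (t ∩ s) := by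
  intro x y hxy
  refine hF fun i hi => ?_
  by_cases his : i ∈ s
  · simp [his, hxy i ⟨hi, his⟩]
  · simp [his]

/-- The boundary of a simplex `s`, as the set of its facets. -/
def boundary (s : Finset I) : Finset (Finset I) := s.image s.erase

lemma subset_of_mem_boundary {s t : Finset I} (h : t ∈ boundary s) : t ⊆ s := by
  obtain ⟨i, -, rfl⟩ := mem_image.1 h
  exact erase_subset i s

variable [Fintype I] [∀ i, Fintype (V i)] [∀ i, Nonempty (V i)]

lemma expect_expect_piecewise (s : Finset I) (F : (∀ i, V i) → ℝ) :
    𝔼 z, 𝔼 x, F (s.piecewise x z) = 𝔼 x, F x := by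
  have hinvol : Involutive fun p : (∀ i, V i) × (∀ i, V i) =>
      (s.piecewise p.1 p.2, s.piecewise p.2 p.1) := by
    rintro ⟨z, x⟩
    ext i <;> by_cases hi : i ∈ s <;> simp [hi]
  calc 𝔼 z, 𝔼 x, F (s.piecewise x z)
    _ = 𝔼 p : (∀ i, V i) × (∀ i, V i), F (s.piecewise p.2 p.1) :=
      (expect_product' univ univ fun z x => F (s.piecewise x z)).symm
    _ = 𝔼 p : (∀ i, V i) × (∀ i, V i), F p.2 := Fintype.expect_equiv hinvol.toPerm _ _ fun _ => rfl
    _ = 𝔼 _z : ∀ i, V i, 𝔼 x, F x := expect_product' univ univ fun _ x => F x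
    _ = 𝔼 x, F x := Fintype.expect_const _

lemma expect_mul_of_dependsOn_compl {s : Finset I} {F G : (∀ i, V i) → ℝ} (hF : DependsOn F s)
    (hG : DependsOn G (s : Set I)ᶜ) : 𝔼 x, F x * G x = (𝔼 x, F x) * 𝔼 x, G x := by
  have hFx (x z) : F (s.piecewise x z) = F x := hF fun i hi => s.piecewise_eq_of_mem x z hi
  have hGz (x z) : G (s.piecewise x z) = G z := hG fun i hi => s.piecewise_eq_of_notMem x z hi
  rw [← expect_expect_piecewise s]
  simp only [hFx, hGz, ← expect_mul, ← mul_expect]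

lemma prob_and_of_dependsOn_compl {s : Finset I} {P Q : (∀ i, V i) → Prop} (hP : DependsOn P s)
    (hQ : DependsOn Q (s : Set I)ᶜ) : prob (fun x => P x ∧ Q x) = prob P * prob Q := by
  simp only [prob, ind_and]
  exact expect_mul_of_dependsOn_compl (fun x y h => congrArg ind (hP h))
    fun x y h => congrArg ind (hQ h)

lemma abs_expect_mul_ind_le_of_isPseudorandom {s : Finset I} {p : (∀ i, V i) → ℝ} {δ : ℝ}
    (hp : DependsOn p s) (hpseudo : IsPseudorandom coords (boundary s) p δ)
    {Y : (∀ i, V i) → Prop} (hY : SplitsOver s Y) : |𝔼 x, p x * ind (Y x)| ≤ δ := by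
  obtain ⟨Z, hZ, hYZ⟩ := hY
  have hpx (x z) : p (s.piecewise x z) = p x := hp fun i hi => s.piecewise_eq_of_mem x z hi
  have hfixed (z : ∀ i, V i) : |𝔼 x, p x * ind (Y (s.piecewise x z))| ≤ δ := by
    let U (t : Finset I) (x : ∀ i, V i) : Prop := ∀ i ∈ s, s.erase i = t → Z i (s.piecewise x z)
    have hU : FamilyFactorsThrough U coords := by
      refine familyFactorsThrough_coords_iff.2 fun t => dependsOn_forall_mem fun i hi x y hxy => ?_
      refine forall_congr fun hit => dependsOn_piecewise_left (hZ i hi) z fun j hj => hxy j ?_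
      simpa [← hit, and_comm] using hj
    have hYU (x : ∀ i, V i) : Y (s.piecewise x z) ↔ ∀ t ∈ boundary s, U t x := by
      simp only [hYZ, U, boundary, mem_image]
      exact ⟨fun h _ _ i hi _ => h i hi, fun h i hi => h _ ⟨i, hi, rfl⟩ i hi rfl⟩
    simpa only [hYU] using hpseudo U hU
  rw [← expect_expect_piecewise s]
  simp only [hpx]
  exact (abs_expect_le _ _).trans (expect_le univ_nonempty fun z _ => hfixed z)

end Product

section Counting

variable {I : Type*} {V : I → Type*} {β β' : Type*} [Fintype I] [DecidableEq I]
  [∀ i, Fintype (V i)]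

lemma abs_prob_forall_mem_sub_prod_mul_le {J : Finset (Finset I)}
    (hJ : IsAntichain (· ⊆ ·) (J : Set (Finset I))) {A : Finset I → (∀ i, V i) → Prop}
    (hA : ∀ s, DependsOn (A s) s) {d : Finset I → ℝ} (hd : ∀ s, d s ∈ Set.Icc (0 : ℝ) 1) {err : ℝ}
    {Y : (∀ i, V i) → Prop} (hYsplit : ∀ s ∈ J, SplitsOver s Y)
    (hstep : ∀ s ∈ J, ∀ Y' : (∀ i, V i) → Prop, SplitsOver s Y' → (∀ x, Y' x → Y x) →
      |prob (fun x => Y' x ∧ A s x) - d s * prob Y'| ≤ err) :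
    |prob (fun x => Y x ∧ ∀ s ∈ J, A s x) - (∏ s ∈ J, d s) * prob Y| ≤ #J * err := by
  induction J using Finset.induction_on with
  | empty => simp
  | insert s J hs ih =>
    have hsub : J ⊆ insert s J := subset_insert s J
    have hIH := ih (hJ.subset (coe_subset.2 hsub)) (fun t ht => hYsplit t (hsub ht))
      fun t ht => hstep t (hsub ht)
    have hs_mem := mem_insert_self s J
    have hAsplit (t) (ht : t ∈ J) : SplitsOver s (A t) :=
      splitsOver_of_isAntichain hJ hs_mem (hsub ht) (fun hst => hs (hst ▸ ht)) (hA t)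
    have hone := hstep s hs_mem (fun x => Y x ∧ ∀ t ∈ J, A t x)
      ((hYsplit s hs_mem).and (splitsOver_forall_mem hAsplit)) fun x hx => hx.1
    have hreorder (x) : (Y x ∧ ∀ t ∈ insert s J, A t x) ↔ (Y x ∧ ∀ t ∈ J, A t x) ∧ A s x := by
      rw [forall_mem_insert, and_assoc, and_comm (a := A s x)]
    rw [prob_congr hreorder, prod_insert hs, card_insert_of_notMem hs]
    set D : ℝ := ∏ t ∈ J, d t
    set P : ℝ := prob fun x => Y x ∧ ∀ t ∈ J, A t x
    calc |prob (fun x => (Y x ∧ ∀ t ∈ J, A t x) ∧ A s x) - d s * D * prob Y|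
      _ ≤ |prob (fun x => (Y x ∧ ∀ t ∈ J, A t x) ∧ A s x) - d s * P| +
          |d s * P - d s * D * prob Y| := abs_sub_le _ _ _
      _ = |prob (fun x => (Y x ∧ ∀ t ∈ J, A t x) ∧ A s x) - d s * P| +
          d s * |P - D * prob Y| := by
        rw [mul_assoc, ← mul_sub, abs_mul, abs_of_nonneg (hd s).1]
      _ ≤ err + #J * err :=
        add_le_add hone ((mul_le_of_le_one_left (abs_nonneg _) (hd s).2).trans hIH)
      _ = (#J + 1 : ℕ) * err := by
        push_cast
        ring

lemma pow_card_mul_prob_forall_sub_le {E H : I → (∀ i, V i) → Prop}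
    (hE : ∀ e, DependsOn (E e) {e}ᶜ) (hH : ∀ e, DependsOn (H e) {e}ᶜ) {θ δ : ℝ}
    (hθ : θ ∈ Set.Icc (0 : ℝ) 1) (hδ : 0 ≤ δ)
    (hstep : ∀ e, ∀ Y : (∀ i, V i) → Prop, SplitsOver {e}ᶜ Y →
      θ * prob (fun x => Y x ∧ H e x) - δ ≤ prob (fun x => Y x ∧ E e x)) (J : Finset I) :
    θ ^ #J * prob (fun x => ∀ e, H e x) - #J * δ ≤ prob (fun x => ∀ e, J.piecewise E H e x) := by
  induction J using Finset.induction_on with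
  | empty => simp
  | insert a J ha ih =>
    let Y (x : ∀ i, V i) : Prop := ∀ e ∈ ({a}ᶜ : Finset I), J.piecewise E H e x
    have hYsplit : SplitsOver {a}ᶜ Y := by
      refine ⟨J.piecewise E H, fun e _ => ?_, fun x => Iff.rfl⟩
      by_cases he : e ∈ J
      · simpa [he] using hE e
      · simpa [he] using hH e
    have hY_H (x) : (∀ e, J.piecewise E H e x) ↔ Y x ∧ H a x := by
      rw [← and_forall_ne a, and_comm]
      simp [Y, ha]
    have hY_E (x) : (∀ e, (insert a J).piecewise E H e x) ↔ Y x ∧ E a x := by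
      rw [← and_forall_ne a, and_comm]
      simp +contextual [Y, piecewise_insert_of_ne]
    rw [prob_congr hY_E, card_insert_of_notMem ha, pow_succ']
    rw [prob_congr hY_H] at ih
    have hscaled := mul_le_mul_of_nonneg_left ih hθ.1
    have herr := mul_le_of_le_one_left (mul_nonneg (Nat.cast_nonneg #J) hδ) hθ.2
    push_cast
    linarith [hstep a Y hYsplit]

variable [∀ i, Nonempty (V i)]

lemma abs_expect_mul_ind_le_of_condAvg_abs_le {s : Finset I} {p : (∀ i, V i) → ℝ}
    (hp : DependsOn p s) {q : (∀ i, V i) → β} (hq : DependsOn q s) {γ : ℝ} {x₀ : ∀ i, V i}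
    (hγ : condAvg q (fun x => |p x|) x₀ ≤ γ) {R Y : (∀ i, V i) → Prop}
    (hR : DependsOn R (s : Set I)ᶜ) (hY : ∀ x, Y x → q x = q x₀ ∧ R x) :
    |𝔼 x, p x * ind (Y x)| ≤ γ * prob (fun x => q x = q x₀ ∧ R x) := by
  have hcell : DependsOn (fun x => q x = q x₀) s := fun x y h => by simp only [hq h]
  have hpcell : DependsOn (fun x => |p x| * ind (q x = q x₀)) s :=
    fun x y h => by simp only [hp h, hq h]
  calc |𝔼 x, p x * ind (Y x)|
    _ ≤ 𝔼 x, |p x * ind (Y x)| := abs_expect_le _ _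
    _ ≤ 𝔼 x, |p x| * ind (q x = q x₀) * ind (R x) := by
      refine expect_le_expect fun x _ => ?_
      rw [abs_mul, abs_of_nonneg (ind_nonneg _), mul_assoc, ← ind_and]
      exact mul_le_mul_of_nonneg_left (ind_mono (hY x)) (abs_nonneg _)
    _ = condAvg q (fun x => |p x|) x₀ * prob (fun x => q x = q x₀ ∧ R x) := by
      rw [expect_mul_of_dependsOn_compl hpcell fun x y h => congrArg ind (hR h),
        expect_mul_ind_cell, prob_and_of_dependsOn_compl hcell hR, mul_assoc, prob, prob]
    _ ≤ γ * prob (fun x => q x = q x₀ ∧ R x) := mul_le_mul_of_nonneg_right hγ (prob_nonneg _)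

lemma abs_prob_and_sub_le_of_isPseudorandom {s : Finset I} {A : (∀ i, V i) → Prop}
    (hA : DependsOn A s) {q : (∀ i, V i) → β} (hq : DependsOn q s) {q' : (∀ i, V i) → β'}
    (hq' : DependsOn q' s) {γ δ : ℝ} {x₀ : ∀ i, V i} {R Y : (∀ i, V i) → Prop}
    (hpseudo : IsPseudorandom coords (boundary s)
      (fun x => ind (A x) - condAvg q' (fun y => ind (A y)) x) δ)
    (hγ : condAvg q (fun x => |condAvg q' (fun y => ind (A y)) x -
      condAvg q (fun y => ind (A y)) x|) x₀ ≤ γ)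
    (hR : DependsOn R (s : Set I)ᶜ) (hYsplit : SplitsOver s Y) (hY : ∀ x, Y x → q x = q x₀ ∧ R x) :
    |prob (fun x => Y x ∧ A x) - condAvg q (fun y => ind (A y)) x₀ * prob Y| ≤
      γ * prob (fun x => q x = q x₀ ∧ R x) + δ := by
  set F : (∀ i, V i) → ℝ := fun x => ind (A x)
  have hF : DependsOn F s := fun x y h => congrArg ind (hA h)
  have hG : DependsOn (condAvg q F) s := dependsOn_of_factorsThrough (condAvg_factorsThrough q F) hq
  have hG' : DependsOn (condAvg q' F) s :=
    dependsOn_of_factorsThrough (condAvg_factorsThrough q' F) hq'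
  have hrandom : |𝔼 x, (F x - condAvg q' F x) * ind (Y x)| ≤ δ :=
    abs_expect_mul_ind_le_of_isPseudorandom (fun x y h => congrArg₂ _ (hF h) (hG' h)) hpseudo
      hYsplit
  have hclose : |𝔼 x, (condAvg q' F x - condAvg q F x) * ind (Y x)| ≤
      γ * prob (fun x => q x = q x₀ ∧ R x) :=
    abs_expect_mul_ind_le_of_condAvg_abs_le (fun x y h => congrArg₂ _ (hG' h) (hG h)) hq hγ hR hY
  have hsplit : prob (fun x => Y x ∧ A x) - condAvg q F x₀ * prob Y =
      𝔼 x, (condAvg q' F x - condAvg q F x) * ind (Y x) +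
        𝔼 x, (F x - condAvg q' F x) * ind (Y x) := by
    rw [prob, prob, mul_expect, ← expect_sub_distrib, ← expect_add_distrib]
    refine expect_congr rfl fun x _ => ?_
    rw [ind_and]
    by_cases hx : Y x
    · rw [condAvg_factorsThrough q F (hY x hx).1]
      ring
    · rw [ind_of_false hx]
      ring
  rw [hsplit]
  exact (abs_add_le _ _).trans (add_le_add hclose hrandom)

lemma mul_prob_and_sub_le_of_isPseudorandom {s : Finset I} {E H Y : (∀ i, V i) → Prop}
    (hE : DependsOn E s) {g : (∀ i, V i) → ℝ} (hg : DependsOn g s) (hg_nonneg : ∀ x, 0 ≤ g x)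
    {θ δ : ℝ} (hH : ∀ x, H x → θ ≤ g x)
    (hpseudo : IsPseudorandom coords (boundary s) (fun x => ind (E x) - g x) δ)
    (hY : SplitsOver s Y) :
    θ * prob (fun x => Y x ∧ H x) - δ ≤ prob (fun x => Y x ∧ E x) := by
  have hrandom : |𝔼 x, (ind (E x) - g x) * ind (Y x)| ≤ δ :=
    abs_expect_mul_ind_le_of_isPseudorandom
      (fun x y h => congrArg₂ _ (congrArg ind (hE h)) (hg h)) hpseudo hY
  have hmain : θ * prob (fun x => Y x ∧ H x) ≤ 𝔼 x, g x * ind (Y x) := by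
    rw [prob, mul_expect]
    refine expect_le_expect fun x _ => ?_
    rw [ind_and, mul_left_comm, mul_comm (ind (Y x))]
    refine mul_le_mul_of_nonneg_right ?_ (ind_nonneg _)
    by_cases hx : H x
    · simpa [ind_of_true hx] using hH x hx
    · simpa [ind_of_false hx] using hg_nonneg x
  have hprob : prob (fun x => Y x ∧ E x) =
      𝔼 x, (ind (E x) - g x) * ind (Y x) + 𝔼 x, g x * ind (Y x) := by
    rw [prob, ← expect_add_distrib]
    refine expect_congr rfl fun x _ => ?_
    rw [ind_and]
    ring
  linarith [(abs_le.1 hrandom).1]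

lemma prob_forall_mem_of_dependsOn_singleton {B : I → (∀ i, V i) → Prop}
    (hB : ∀ i, DependsOn (B i) {i}) (s : Finset I) :
    prob (fun x => ∀ i ∈ s, B i x) = ∏ i ∈ s, prob (B i) := by
  induction s using Finset.induction_on with
  | empty => simp [prob_true]
  | insert a s ha ih =>
    have hrest : DependsOn (fun x => ∀ i ∈ s, B i x) (({a} : Finset I) : Set I)ᶜ :=
      dependsOn_forall_mem fun i hi =>
        (hB i).mono (by simpa using (ne_of_mem_of_not_mem hi ha).symm)
    simp only [forall_mem_insert]
    rw [prob_and_of_dependsOn_compl (s := {a}) (by simpa using hB a) hrest, ih, prod_insert ha]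

lemma prob_and_and_le_of_dependsOn_compl {s : Finset I} {W Q R : (∀ i, V i) → Prop}
    (hW : DependsOn W s) (hQ : DependsOn Q s) (hR : DependsOn R (s : Set I)ᶜ) {a : ℝ}
    (h : prob (fun x => W x ∧ Q x) ≤ a * prob Q) :
    prob (fun x => W x ∧ Q x ∧ R x) ≤ a * prob (fun x => Q x ∧ R x) := by
  simp only [← and_assoc]
  rw [prob_and_of_dependsOn_compl (dependsOn_and hW hQ) hR, prob_and_of_dependsOn_compl hQ hR,
    ← mul_assoc]
  exact mul_le_mul_of_nonneg_right h (prob_nonneg R)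

end Counting

section CellCounting

lemma splitsOver_forall_of_one_lt_card {I : Type*} {V : I → Type*} {B : I → (∀ i, V i) → Prop}
    (hB : ∀ i, DependsOn (B i) {i}) {s : Finset I} (hs : 1 < #s) :
    SplitsOver s fun x => ∀ i, B i x := by
  choose other hother_mem hother_ne using fun i => exists_mem_ne hs i
  refine ⟨fun j x => ∀ i, other i = j → B i x, fun j _ x y hxy => ?_, fun x => ?_⟩
  · refine forall_congr fun i => forall_congr fun hij => hB i fun k (hk : k = i) => hxy k ?_
    rintro (rfl : k = j)
    exact hother_ne i (hij.trans hk)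
  · exact ⟨fun h _ _ i _ => h i, fun h i => h _ (hother_mem i) i rfl⟩

/-- The six edges of the tetrahedron with vertex set `Fin 4`. -/
def edges : Finset (Finset (Fin 4)) := powersetCard 2 univ

lemma card_edges : #edges = 6 := by decide

lemma card_filter_mem_edges (e : Fin 4) : #{s ∈ edges | e ∈ s} = 3 := by decide +revert

lemma card_boundary_compl_singleton (e : Fin 4) : #(boundary ({e}ᶜ : Finset (Fin 4))) = 3 := by
  decide +revert

lemma filter_notMem_edges (e : Fin 4) : {s ∈ edges | e ∉ s} = boundary {e}ᶜ := by
  decide +revert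

lemma boundary_subset_edges (e : Fin 4) : boundary {e}ᶜ ⊆ edges :=
  (filter_notMem_edges e).symm.trans_subset (filter_subset _ _)

lemma boundary_of_mem_edges {s : Finset (Fin 4)} (hs : s ∈ edges) :
    boundary s = s.image singleton := by
  decide +revert

lemma exists_mem_boundary_of_mem_edges {s : Finset (Fin 4)} (hs : s ∈ edges) :
    ∃ e : Fin 4, s ∈ boundary {e}ᶜ := by
  decide +revert

lemma isAntichain_edges : IsAntichain (· ⊆ ·) (edges : Set (Finset (Fin 4))) :=
  (Set.sized_powersetCard univ 2).isAntichain

variable {V : Fin 4 → Type*}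

/-- The event that `B i` holds at the three vertices `i` of the face `{e}ᶜ` of the tetrahedron, and
`A s` at its three edges `s`. -/
def faceCell (B : Fin 4 → (∀ i, V i) → Prop) (A : Finset (Fin 4) → (∀ i, V i) → Prop) (e : Fin 4)
    (x : ∀ i, V i) : Prop :=
  (∀ i ∈ ({e}ᶜ : Finset (Fin 4)), B i x) ∧ ∀ s ∈ boundary {e}ᶜ, A s x

lemma dependsOn_faceCell {B : Fin 4 → (∀ i, V i) → Prop} {A : Finset (Fin 4) → (∀ i, V i) → Prop}
    (hB : ∀ i, DependsOn (B i) {i}) (hA : ∀ s, DependsOn (A s) s) (e : Fin 4) :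
    DependsOn (faceCell B A e) {e}ᶜ := by
  refine dependsOn_and (dependsOn_forall_mem fun i hi => (hB i).mono ?_)
    (dependsOn_forall_mem fun s hs => (hA s).mono ?_)
  · simpa [eq_comm] using hi
  · simpa using subset_of_mem_boundary hs

variable [∀ i, Fintype (V i)]

/-- Inside the box where every vertex event `B i` holds, each edge event `A s` is quasirandom of
density `d s`: up to `err`, it is independent of the events that split over `s`. -/
structure IsQuasirandomCell (B : Fin 4 → (∀ i, V i) → Prop)
    (A : Finset (Fin 4) → (∀ i, V i) → Prop) (d : Finset (Fin 4) → ℝ) (err : ℝ) : Prop where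
  dependsOn_vertex : ∀ i, DependsOn (B i) {i}
  dependsOn_edge : ∀ s, DependsOn (A s) s
  density_mem_Icc : ∀ s, d s ∈ Set.Icc (0 : ℝ) 1
  abs_sub_le : ∀ s ∈ edges, ∀ Y : (∀ i, V i) → Prop, SplitsOver s Y → (∀ x, Y x → ∀ i, B i x) →
    |prob (fun x => Y x ∧ A s x) - d s * prob Y| ≤ err

namespace IsQuasirandomCell

variable {B : Fin 4 → (∀ i, V i) → Prop} {A : Finset (Fin 4) → (∀ i, V i) → Prop}
  {d : Finset (Fin 4) → ℝ} {err : ℝ}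

lemma err_nonneg (h : IsQuasirandomCell B A d err) : 0 ≤ err := by
  have hsplit : SplitsOver (V := V) {0, 1} fun x => ∀ i, B i x :=
    splitsOver_forall_of_one_lt_card h.dependsOn_vertex (by decide)
  exact (abs_nonneg _).trans (h.abs_sub_le {0, 1} (by decide) _ hsplit fun _ hx => hx)

lemma splitsOver_vertices (h : IsQuasirandomCell B A d err) {s : Finset (Fin 4)} (hs : s ∈ edges) :
    SplitsOver s fun x => ∀ i, B i x :=
  splitsOver_forall_of_one_lt_card h.dependsOn_vertex (by simp [mem_powersetCard_univ.1 hs])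

lemma abs_prob_sub_prod_mul_le (h : IsQuasirandomCell B A d err) {J : Finset (Finset (Fin 4))}
    (hJ : J ⊆ edges) {Y : (∀ i, V i) → Prop} (hYsplit : ∀ s ∈ J, SplitsOver s Y)
    (hY : ∀ x, Y x → ∀ i, B i x) :
    |prob (fun x => Y x ∧ ∀ s ∈ J, A s x) - (∏ s ∈ J, d s) * prob Y| ≤ #J * err :=
  abs_prob_forall_mem_sub_prod_mul_le (isAntichain_edges.subset (coe_subset.2 hJ))
    h.dependsOn_edge h.density_mem_Icc hYsplit
    fun s hs Y' hY' hsub => h.abs_sub_le s (hJ hs) Y' hY' fun x hx => hY x (hsub x hx)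

variable {e : Fin 4} {W : (∀ i, V i) → Prop}

lemma prob_and_forall_edges_le (h : IsQuasirandomCell B A d err) (hW : DependsOn W {e}ᶜ) :
    prob (fun x => W x ∧ (∀ i, B i x) ∧ ∀ s ∈ edges, A s x) ≤ (∏ s ∈ edges with e ∈ s, d s) *
      prob (fun x => W x ∧ (∀ i, B i x) ∧ ∀ s ∈ boundary {e}ᶜ, A s x) + 3 * err := by
  let Y (x : ∀ i, V i) : Prop := W x ∧ (∀ i, B i x) ∧ ∀ s ∈ boundary {e}ᶜ, A s x
  have hYsplit (s) (hs : s ∈ ({s ∈ edges | e ∈ s} : Finset _)) : SplitsOver s Y := by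
    obtain ⟨hs_edge, hes⟩ := mem_filter.1 hs
    refine (splitsOver_of_dependsOn hW hes (by simp)).and
      ((h.splitsOver_vertices hs_edge).and (splitsOver_forall_mem fun t ht => ?_))
    refine splitsOver_of_isAntichain isAntichain_edges hs_edge (boundary_subset_edges e ht) ?_
      (h.dependsOn_edge t)
    rintro rfl
    simpa using subset_of_mem_boundary ht hes
  have hextend := h.abs_prob_sub_prod_mul_le (filter_subset _ edges) hYsplit fun x hx => hx.2.1
  have hreorder (x) : (W x ∧ (∀ i, B i x) ∧ ∀ s ∈ edges, A s x) ↔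
      Y x ∧ ∀ s ∈ ({s ∈ edges | e ∈ s} : Finset _), A s x := by
    simp only [Y, ← filter_notMem_edges, mem_filter]
    grind
  rw [← prob_congr hreorder, card_filter_mem_edges, Nat.cast_ofNat] at hextend
  linarith [(abs_le.1 hextend).2]

variable [∀ i, Nonempty (V i)] {a : ℝ}

lemma prob_and_forall_face_le (h : IsQuasirandomCell B A d err) (hW : DependsOn W {e}ᶜ)
    (hWcell : prob (fun x => W x ∧ faceCell B A e x) ≤ a * prob (faceCell B A e)) :
    prob (fun x => W x ∧ (∀ i, B i x) ∧ ∀ s ∈ boundary {e}ᶜ, A s x) ≤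
      a * prob (fun x => (∀ i, B i x) ∧ ∀ s ∈ boundary {e}ᶜ, A s x) := by
  have hsplit (x) : ((∀ i, B i x) ∧ ∀ s ∈ boundary {e}ᶜ, A s x) ↔ faceCell B A e x ∧ B e x := by
    rw [faceCell, ← and_forall_ne e]
    simp only [mem_compl, mem_singleton]
    tauto
  simp only [hsplit]
  refine prob_and_and_le_of_dependsOn_compl (s := {e}ᶜ) ?_ ?_ ?_ hWcell
  · simpa using hW
  · simpa using dependsOn_faceCell h.dependsOn_vertex h.dependsOn_edge e
  · simpa using h.dependsOn_vertex e

lemma prob_and_cell_le (h : IsQuasirandomCell B A d err) (hW : DependsOn W {e}ᶜ)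
    (ha : a ∈ Set.Icc (0 : ℝ) 1)
    (hWcell : prob (fun x => W x ∧ faceCell B A e x) ≤ a * prob (faceCell B A e)) :
    prob (fun x => W x ∧ (∀ i, B i x) ∧ ∀ s ∈ edges, A s x) ≤
      a * ((∏ s ∈ edges, d s) * prob (fun x => ∀ i, B i x)) + 6 * err := by
  set PB := prob fun x => ∀ i, B i x
  set PF := prob fun x => (∀ i, B i x) ∧ ∀ s ∈ boundary {e}ᶜ, A s x
  have hface : PF ≤ (∏ s ∈ edges with e ∉ s, d s) * PB + 3 * err := by
    have hcount := h.abs_prob_sub_prod_mul_le (boundary_subset_edges e)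
      (fun s hs => h.splitsOver_vertices (boundary_subset_edges e hs)) fun _ hx => hx
    rw [card_boundary_compl_singleton, Nat.cast_ofNat, ← filter_notMem_edges e] at hcount
    simp only [PF, ← filter_notMem_edges e]
    linarith [(abs_le.1 hcount).2]
  have hprod : (∏ s ∈ edges with e ∈ s, d s) * ∏ s ∈ edges with e ∉ s, d s = ∏ s ∈ edges, d s :=
    prod_filter_mul_prod_filter_not _ _ _
  set D := ∏ s ∈ edges with e ∈ s, d s
  have hD : 0 ≤ D := prod_nonneg fun s _ => (h.density_mem_Icc s).1
  have hD1 : D ≤ 1 :=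
    prod_le_one (fun s _ => (h.density_mem_Icc s).1) fun s _ => (h.density_mem_Icc s).2
  have haD : a * D ≤ 1 := mul_le_one₀ ha.2 hD hD1
  calc prob (fun x => W x ∧ (∀ i, B i x) ∧ ∀ s ∈ edges, A s x)
    _ ≤ D * prob (fun x => W x ∧ (∀ i, B i x) ∧ ∀ s ∈ boundary {e}ᶜ, A s x) + 3 * err :=
      h.prob_and_forall_edges_le hW
    _ ≤ D * (a * ((∏ s ∈ edges with e ∉ s, d s) * PB + 3 * err)) + 3 * err := by
      gcongr
      exact (h.prob_and_forall_face_le hW hWcell).trans (mul_le_mul_of_nonneg_left hface ha.1)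
    _ = a * ((∏ s ∈ edges, d s) * PB) + a * D * (3 * err) + 3 * err := by
      rw [← hprod]
      ring
    _ ≤ a * ((∏ s ∈ edges, d s) * PB) + 6 * err := by
      linarith [mul_le_of_le_one_left (mul_nonneg zero_le_three h.err_nonneg) haD]

lemma le_prob_forall_faceCell_and_not (h : IsQuasirandomCell B A d err)
    {W : Fin 4 → (∀ i, V i) → Prop} (hW : ∀ e, DependsOn (W e) {e}ᶜ)
    (hWcell : ∀ e, prob (fun x => W e x ∧ faceCell B A e x) ≤ 1 / 8 * prob (faceCell B A e))
    {θ : ℝ} (hθ : 0 ≤ θ) (hd : ∀ s ∈ edges, θ ≤ d s)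
    (herr : err ≤ θ ^ 6 / 120 * prob (fun x => ∀ i, B i x)) :
    θ ^ 6 / 4 * prob (fun x => ∀ i, B i x) ≤ prob (fun x => ∀ e, faceCell B A e x ∧ ¬W e x) := by
  set PB := prob fun x => ∀ i, B i x
  let cell (x : ∀ i, V i) : Prop := (∀ i, B i x) ∧ ∀ s ∈ edges, A s x
  have hdensity : θ ^ 6 * PB ≤ (∏ s ∈ edges, d s) * PB := by
    refine mul_le_mul_of_nonneg_right ?_ (prob_nonneg _)
    rw [← card_edges, ← prod_const]
    exact prod_le_prod (fun _ _ => hθ) hd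
  have hcell : (∏ s ∈ edges, d s) * PB - 6 * err ≤ prob cell := by
    have hcount := h.abs_prob_sub_prod_mul_le Subset.rfl (fun s hs => h.splitsOver_vertices hs)
      fun _ hx => hx
    rw [card_edges, Nat.cast_ofNat] at hcount
    linarith [(abs_le.1 hcount).1]
  have hexceptional : prob (fun x => ∃ e ∈ univ, W e x ∧ cell x) ≤
      ∑ _e : Fin 4, (1 / 8 * ((∏ s ∈ edges, d s) * PB) + 6 * err) :=
    (prob_exists_le _ _).trans <| sum_le_sum fun e _ =>
      h.prob_and_cell_le (hW e) ⟨by norm_num, by norm_num⟩ (hWcell e)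
  have hunion : prob cell ≤ prob (fun x => ∀ e, faceCell B A e x ∧ ¬W e x) +
      prob (fun x => ∃ e ∈ univ, W e x ∧ cell x) := by
    refine (prob_mono fun x hx => ?_).trans (prob_or_le _ _)
    by_cases hex : ∃ e, W e x
    · exact Or.inr (hex.imp fun e he => ⟨mem_univ e, he, hx⟩)
    · exact Or.inl fun e => ⟨⟨fun i _ => hx.1 i, fun s hs => hx.2 s (boundary_subset_edges e hs)⟩,
        fun he => hex ⟨e, he⟩⟩
  rw [sum_const, card_univ, Fintype.card_fin, nsmul_eq_mul, Nat.cast_ofNat] at hexceptional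
  linarith

end IsQuasirandomCell

end CellCounting

section Removal

universe u

/-- The accuracy to which the colour classes of the edges are regularized; `1 / 240` is what
`IsQuasirandomCell.le_prob_forall_faceCell_and_not` asks for, shared between two error terms. -/
noncomputable def edgeTolerance (η : ℝ) (M : ℕ) : ℝ := (η / (M + 1)) ^ 6 / 240

/-- The accuracy to which the faces are regularized: an eighth of the predicted proportion of
tetrahedra in a cell of a partition with `M` edge colours and `L` vertex colours. -/
noncomputable def faceTolerance (η : ℝ) (M L : ℕ) : ℝ :=
  (η / 2) ^ 4 * ((η / (M + 1)) ^ 6 / 4 * (η / (L + 1)) ^ 4) / 8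

lemma edgeTolerance_pos {η : ℝ} (hη : 0 < η) (M : ℕ) : 0 < edgeTolerance η M := by
  unfold edgeTolerance
  positivity

lemma faceTolerance_pos {η : ℝ} (hη : 0 < η) (M L : ℕ) : 0 < faceTolerance η M L := by
  unfold faceTolerance
  positivity

lemma faceTolerance_anti {η : ℝ} (hη : 0 < η) (M : ℕ) : Antitone (faceTolerance η M) := by
  intro L L' h
  unfold faceTolerance
  gcongr

lemma natCast_mul_div_add_one_le {η : ℝ} (hη : 0 ≤ η) (n : ℕ) : n * (η / (n + 1)) ≤ η := by
  rw [mul_div_assoc', div_le_iff₀ (by positivity)]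
  linarith

variable {V : Fin 4 → Type u} [∀ i, Fintype (V i)]

/-- A regular partition for the face events `E e`, at two levels: colourings `edge` and `fineEdge`
of the edges regularize the faces, and colourings `vertex` and `fineVertex` of the vertices
regularize the classes of `edge`. All four families are indexed by simplices of any dimension, of
which only the edges and the singletons matter. -/
structure RegularPartition (E : Fin 4 → (∀ i, V i) → Prop) (η δ : ℝ) (M L : ℕ) where
  edge : Finset (Fin 4) → (∀ i, V i) → ℕ
  fineEdge : Finset (Fin 4) → (∀ i, V i) → ℕ
  vertex : Finset (Fin 4) → (∀ i, V i) → ℕ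
  fineVertex : Finset (Fin 4) → (∀ i, V i) → ℕ
  face_regular : IsRegularPair coords (fun e : Fin 4 => boundary {e}ᶜ) (fun e x => ind (E e x))
    (η ^ 3 / 32) δ M edge fineEdge
  edge_regular : IsRegularPair coords (fun k : Finset (Fin 4) × Fin M => boundary k.1)
    (fun k x => ind (edge k.1 x = k.2)) ((edgeTolerance η M * (η / (M + 1))) ^ 2)
    (edgeTolerance η M * (η / (L + 1)) ^ 4) L vertex fineVertex

lemma exists_regularPartition {η : ℝ} (hη : 0 < η) :
    ∃ ρ > 0, ∀ (V : Fin 4 → Type u) [∀ i, Fintype (V i)] [∀ i, Nonempty (V i)]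
      (E : Fin 4 → (∀ i, V i) → Prop), ∃ δ M L, ρ ≤ δ ∧ δ ≤ faceTolerance η M L ∧
        Nonempty (RegularPartition E η δ M L) := by
  choose L₀ hL₀ using fun M : ℕ =>
    exists_isRegularPair.{u, u, 0, 0} (fun k : Finset (Fin 4) × Fin M => boundary k.1)
      (pow_pos (mul_pos (edgeTolerance_pos hη M) (by positivity : 0 < η / (M + 1))) 2)
      (δ := fun L => edgeTolerance η M * (η / (L + 1)) ^ 4)
      fun L => mul_pos (edgeTolerance_pos hη M) (by positivity)
  let δ (M : ℕ) : ℝ := faceTolerance η M (L₀ M)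
  have hδ (M : ℕ) : 0 < δ M := faceTolerance_pos hη M (L₀ M)
  obtain ⟨M₀, hM₀⟩ := exists_isRegularPair.{u, u, 0, 0} (fun e : Fin 4 => boundary {e}ᶜ)
    (by positivity : 0 < η ^ 3 / 32) hδ
  obtain ⟨M₁, -, hM₁⟩ := (range (M₀ + 1)).exists_min_image δ nonempty_range_add_one
  refine ⟨δ M₁, hδ M₁, fun V _ _ E => ?_⟩
  obtain ⟨c, c', M, hM, hface⟩ := hM₀ (∀ i, V i) (fun s => ∀ i : s, V i) coords
    (fun e x => ind (E e x)) fun e x => ind_mem_Icc _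
  obtain ⟨b, b', L, hL, hedge⟩ := hL₀ M (∀ i, V i) (fun s => ∀ i : s, V i) coords
    (fun k x => ind (c k.1 x = k.2)) fun k x => ind_mem_Icc _
  exact ⟨δ M, M, L, hM₁ M (mem_range_succ_iff.2 hM), faceTolerance_anti hη M hL,
    ⟨⟨c, c', b, b', hface, hedge⟩⟩⟩

namespace RegularPartition

variable {E : Fin 4 → (∀ i, V i) → Prop} {η δ : ℝ} {M L : ℕ} (P : RegularPartition E η δ M L)

lemma dependsOn_edge (s : Finset (Fin 4)) : DependsOn (P.edge s) s :=
  familyFactorsThrough_coords_iff.1 P.face_regular.coarse.factorsThrough s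

lemma dependsOn_fineEdge (s : Finset (Fin 4)) : DependsOn (P.fineEdge s) s :=
  familyFactorsThrough_coords_iff.1 P.face_regular.fine_factorsThrough s

lemma dependsOn_vertex (s : Finset (Fin 4)) : DependsOn (P.vertex s) s :=
  familyFactorsThrough_coords_iff.1 P.edge_regular.coarse.factorsThrough s

lemma dependsOn_vertex_eq (i : Fin 4) (a : ℕ) : DependsOn (fun x => P.vertex {i} x = a) {i} :=
  fun _ _ h => congrArg (· = a) (P.dependsOn_vertex {i} (by simpa using h))

lemma dependsOn_edge_eq (s : Finset (Fin 4)) (a : ℕ) : DependsOn (fun x => P.edge s x = a) s :=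
  fun _ _ h => congrArg (· = a) (P.dependsOn_edge s h)

lemma dependsOn_fineVertex (s : Finset (Fin 4)) : DependsOn (P.fineVertex s) s :=
  familyFactorsThrough_coords_iff.1 P.edge_regular.fine_factorsThrough s

/-- The density of the face event `E e` in the cell of the edge colours of the face `{e}ᶜ`. -/
noncomputable def faceDensity (e : Fin 4) : (∀ i, V i) → ℝ :=
  condAvg (joint (boundary {e}ᶜ) P.edge) fun y => ind (E e y)

/-- The density of the face event `E e` in the cell of the fine edge colours of the face `{e}ᶜ`. -/
noncomputable def fineFaceDensity (e : Fin 4) : (∀ i, V i) → ℝ :=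
  condAvg (joint (boundary {e}ᶜ) P.fineEdge) fun y => ind (E e y)

/-- The density of the `a`-coloured edges among the edges over `s` with given vertex colours. -/
noncomputable def edgeDensity (s : Finset (Fin 4)) (a : ℕ) : (∀ i, V i) → ℝ :=
  condAvg (joint (boundary s) P.vertex) fun y => ind (P.edge s y = a)

/-- The mean distance, over the edges over `s` with given vertex colours, between the densities of
the colour `a` relative to the fine and to the coarse vertex colours. -/
noncomputable def edgeDeviation (s : Finset (Fin 4)) (a : ℕ) : (∀ i, V i) → ℝ :=
  condAvg (joint (boundary s) P.vertex) fun x =>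
    |condAvg (joint (boundary s) P.fineVertex) (fun y => ind (P.edge s y = a)) x -
      condAvg (joint (boundary s) P.vertex) (fun y => ind (P.edge s y = a)) x|

/-- The event that refining the edge colouring changes the density of `E e` by more than `η / 2`. -/
def Exceptional (e : Fin 4) (x : ∀ i, V i) : Prop :=
  η / 2 < |P.fineFaceDensity e x - P.faceDensity e x|

/-- The colours of the three vertices and of the three edges of the face `{e}ᶜ`. -/
def faceColors (e : Fin 4) (x : ∀ i, V i) :
    (({e}ᶜ : Finset (Fin 4)) → ℕ) × (boundary ({e}ᶜ : Finset (Fin 4)) → ℕ) :=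
  (joint {e}ᶜ (fun i => P.vertex {i}) x, joint (boundary {e}ᶜ) P.edge x)

/-- The colour class of the vertex `i` is not too small. -/
def VertexGood (i : Fin 4) (x : ∀ i, V i) : Prop :=
  η / (L + 1) ≤ prob fun y => P.vertex {i} y = P.vertex {i} x

/-- The colour class of the edge over `s` is neither sparse nor irregular. -/
def EdgeGood (s : Finset (Fin 4)) (x : ∀ i, V i) : Prop :=
  η / (M + 1) ≤ P.edgeDensity s (P.edge s x) x ∧
    P.edgeDeviation s (P.edge s x) x ≤ edgeTolerance η M

/-- The face event `E e` is not sparse, and few faces with the same vertex and edge colours are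
exceptional. -/
def FaceGood (e : Fin 4) (x : ∀ i, V i) : Prop :=
  η ≤ P.faceDensity e x ∧ condAvg (P.faceColors e) (fun y => ind (P.Exceptional e y)) x ≤ 1 / 8

/-- The part of the face event `E e` that survives the removal. -/
def Cleaned (e : Fin 4) (x : ∀ i, V i) : Prop :=
  E e x ∧ (∀ i ∈ ({e}ᶜ : Finset (Fin 4)), P.VertexGood i x) ∧
    (∀ s ∈ boundary {e}ᶜ, P.EdgeGood s x) ∧ P.FaceGood e x

lemma dependsOn_joint_edge (e : Fin 4) : DependsOn (joint (boundary {e}ᶜ) P.edge) {e}ᶜ :=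
  dependsOn_joint fun s hs => (P.dependsOn_edge s).mono (by simpa using subset_of_mem_boundary hs)

lemma dependsOn_joint_vertex (s : Finset (Fin 4)) : DependsOn (joint (boundary s) P.vertex) s :=
  dependsOn_joint fun t ht => (P.dependsOn_vertex t).mono (subset_of_mem_boundary ht)

lemma dependsOn_joint_fineVertex (s : Finset (Fin 4)) :
    DependsOn (joint (boundary s) P.fineVertex) s :=
  dependsOn_joint fun t ht => (P.dependsOn_fineVertex t).mono (subset_of_mem_boundary ht)

lemma dependsOn_faceDensity (e : Fin 4) : DependsOn (P.faceDensity e) {e}ᶜ :=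
  dependsOn_of_factorsThrough (condAvg_factorsThrough _ _) (P.dependsOn_joint_edge e)

lemma dependsOn_fineFaceDensity (e : Fin 4) : DependsOn (P.fineFaceDensity e) {e}ᶜ :=
  dependsOn_of_factorsThrough (condAvg_factorsThrough _ _) <| dependsOn_joint fun s hs =>
    (P.dependsOn_fineEdge s).mono (by simpa using subset_of_mem_boundary hs)

lemma dependsOn_exceptional (e : Fin 4) : DependsOn (P.Exceptional e) {e}ᶜ := fun x y h => by
  simp only [Exceptional, P.dependsOn_faceDensity e h, P.dependsOn_fineFaceDensity e h]

lemma dependsOn_faceColors (e : Fin 4) : DependsOn (P.faceColors e) {e}ᶜ := fun x y h =>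
  Prod.ext (dependsOn_joint (fun i hi => (P.dependsOn_vertex {i}).mono
    (by simpa [eq_comm] using hi)) h) (P.dependsOn_joint_edge e h)

lemma faceColors_eq_iff {e : Fin 4} {x y : ∀ i, V i} : P.faceColors e x = P.faceColors e y ↔
    faceCell (fun i x => P.vertex {i} x = P.vertex {i} y) (fun s x => P.edge s x = P.edge s y)
      e x := by
  simp only [faceColors, Prod.mk.injEq, joint_eq_iff, faceCell]

lemma dependsOn_edgeGood (s : Finset (Fin 4)) : DependsOn (P.EdgeGood s) s := fun x y h => by
  have hcolor := P.dependsOn_joint_vertex s h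
  simp only [EdgeGood, edgeDensity, edgeDeviation, P.dependsOn_edge s h,
    condAvg_factorsThrough _ _ hcolor]

lemma dependsOn_faceGood (e : Fin 4) : DependsOn (P.FaceGood e) {e}ᶜ := fun x y h => by
  simp only [FaceGood, P.dependsOn_faceDensity e h,
    condAvg_factorsThrough _ _ (P.dependsOn_faceColors e h)]

lemma dependsOn_cleaned (hE : ∀ e, DependsOn (E e) {e}ᶜ) (e : Fin 4) :
    DependsOn (P.Cleaned e) {e}ᶜ := by
  refine dependsOn_and (hE e) (dependsOn_and (dependsOn_forall_mem fun i hi x y h => ?_)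
    (dependsOn_and (dependsOn_forall_mem fun s hs => ?_) (P.dependsOn_faceGood e)))
  · have hcolor : P.vertex {i} x = P.vertex {i} y :=
      (P.dependsOn_vertex {i}).mono (by simpa [eq_comm] using hi) h
    simp only [VertexGood, hcolor]
  · exact (P.dependsOn_edgeGood s).mono (by simpa using subset_of_mem_boundary hs)

lemma prob_not_vertexGood_le (hη : 0 ≤ η) (i : Fin 4) :
    prob (fun x => ¬P.VertexGood i x) ≤ η := by
  simp only [VertexGood, not_le]
  refine (prob_cell_lt_le (P.edge_regular.coarse.lt {i}) (by positivity)).trans ?_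
  exact natCast_mul_div_add_one_le hη L

lemma prob_exceptional_le (hη : 0 < η) (e : Fin 4) : prob (P.Exceptional e) ≤ η / 8 :=
  calc prob (P.Exceptional e)
    _ = prob (fun x => (η / 2) ^ 2 < (P.fineFaceDensity e x - P.faceDensity e x) ^ 2) :=
      prob_congr fun x => by rw [Exceptional, sq_lt_sq, abs_of_pos (half_pos hη)]
    _ ≤ (𝔼 x, (P.fineFaceDensity e x - P.faceDensity e x) ^ 2) / (η / 2) ^ 2 :=
      prob_lt_le_expect_div (fun x => sq_nonneg _) (by positivity)
    _ ≤ η ^ 3 / 32 / (η / 2) ^ 2 := by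
      gcongr
      exact P.face_regular.expect_sq_le e
    _ = η / 8 := by
      field_simp
      norm_num

lemma half_le_fineFaceDensity {e : Fin 4} {x x₀ : ∀ i, V i} (hgood : P.FaceGood e x₀)
    (hx : P.faceColors e x = P.faceColors e x₀) (hnot : ¬P.Exceptional e x) :
    η / 2 ≤ P.fineFaceDensity e x := by
  have hcoarse : P.faceDensity e x = P.faceDensity e x₀ :=
    condAvg_factorsThrough _ _ (congrArg Prod.snd hx)
  have hclose := (abs_le.1 (not_lt.1 hnot)).1
  linarith [hgood.1]

variable [∀ i, Nonempty (V i)]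

lemma expect_abs_fine_sub_coarse_le (hη : 0 ≤ η) (s : Finset (Fin 4)) {a : ℕ} (ha : a < M) :
    𝔼 x, |condAvg (joint (boundary s) P.fineVertex) (fun y => ind (P.edge s y = a)) x -
      condAvg (joint (boundary s) P.vertex) (fun y => ind (P.edge s y = a)) x| ≤
      edgeTolerance η M * (η / (M + 1)) := by
  refine expect_abs_le_of_expect_sq_le ?_ (P.edge_regular.expect_sq_le (s, ⟨a, ha⟩))
  unfold edgeTolerance
  positivity

lemma prob_not_edgeGood_le (hη : 0 < η) (s : Finset (Fin 4)) :
    prob (fun x => ¬P.EdgeGood s x) ≤ 2 * η := by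
  have hcolor := P.face_regular.coarse.lt s
  have hsparse : prob (fun x => P.edgeDensity s (P.edge s x) x < η / (M + 1)) ≤ η :=
    (prob_apply_color_le (P := fun a x => P.edgeDensity s a x < η / (M + 1)) hcolor fun a _ =>
      prob_and_condAvg_lt_le _ (fun x => P.edge s x = a) (by positivity)).trans
      (natCast_mul_div_add_one_le hη.le M)
  have hirregular : prob (fun x => edgeTolerance η M < P.edgeDeviation s (P.edge s x) x) ≤ η := by
    have hγ := edgeTolerance_pos hη M
    refine (prob_apply_color_le (P := fun a x => edgeTolerance η M < P.edgeDeviation s a x)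
      hcolor fun a ha => ?_).trans (natCast_mul_div_add_one_le hη.le M)
    refine (prob_mono fun x hx => hx.2).trans
      ((prob_lt_condAvg_le _ (fun x => abs_nonneg _) hγ).trans ?_)
    rw [div_le_iff₀' hγ]
    exact P.expect_abs_fine_sub_coarse_le hη.le s ha
  simp only [EdgeGood, not_and_or, not_le]
  linarith [prob_or_le (fun x => P.edgeDensity s (P.edge s x) x < η / (M + 1))
    fun x => edgeTolerance η M < P.edgeDeviation s (P.edge s x) x]

lemma prob_and_not_faceGood_le (hη : 0 < η) (e : Fin 4) :
    prob (fun x => E e x ∧ ¬P.FaceGood e x) ≤ 2 * η := by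
  have hsparse : prob (fun x => E e x ∧ P.faceDensity e x < η) ≤ η :=
    prob_and_condAvg_lt_le _ (E e) hη.le
  have hatypical : prob (fun x =>
      1 / 8 < condAvg (P.faceColors e) (fun y => ind (P.Exceptional e y)) x) ≤ η := by
    refine (prob_lt_condAvg_le _ (fun x => ind_nonneg _) (by norm_num)).trans ?_
    rw [div_le_iff₀ (by norm_num)]
    exact (P.prob_exceptional_le hη e).trans_eq (by ring)
  rw [two_mul]
  refine (prob_mono fun x hx => ?_).trans
    ((prob_or_le _ _).trans (add_le_add hsparse hatypical))
  rcases not_and_or.1 hx.2 with hlow | hexceptional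
  · exact Or.inl ⟨hx.1, not_le.1 hlow⟩
  · exact Or.inr (not_le.1 hexceptional)

lemma prob_and_not_cleaned_le (hη : 0 < η) (e : Fin 4) :
    prob (fun x => E e x ∧ ¬P.Cleaned e x) ≤ 11 * η := by
  have hvertex : prob (fun x => ∃ i ∈ ({e}ᶜ : Finset (Fin 4)), ¬P.VertexGood i x) ≤ 3 * η := by
    refine (prob_exists_le _ _).trans
      ((sum_le_sum fun i _ => P.prob_not_vertexGood_le hη.le i).trans_eq ?_)
    simp [card_compl]
  have hedge : prob (fun x => ∃ s ∈ boundary {e}ᶜ, ¬P.EdgeGood s x) ≤ 6 * η := by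
    refine (prob_exists_le _ _).trans
      ((sum_le_sum fun s _ => P.prob_not_edgeGood_le hη s).trans_eq ?_)
    rw [sum_const, card_boundary_compl_singleton, nsmul_eq_mul]
    ring
  have hface := P.prob_and_not_faceGood_le hη e
  rw [show 11 * η = 3 * η + (6 * η + 2 * η) by ring]
  refine (prob_mono fun x hx => ?_).trans ((prob_or_le _ _).trans
    (add_le_add hvertex ((prob_or_le _ _).trans (add_le_add hedge hface))))
  simp only [Cleaned, not_and_or] at hx
  grind

variable {x₀ : ∀ i, V i}

lemma pow_four_le_prob_vertices (hη : 0 ≤ η) (hgood : ∀ i, P.VertexGood i x₀) :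
    (η / (L + 1)) ^ 4 ≤ prob fun x => ∀ i, P.vertex {i} x = P.vertex {i} x₀ := by
  have hprod := prob_forall_mem_of_dependsOn_singleton
    (fun i => P.dependsOn_vertex_eq i (P.vertex {i} x₀)) univ
  simp only [mem_univ, true_imp_iff] at hprod
  calc (η / (L + 1)) ^ 4
    _ = ∏ _i : Fin 4, η / (L + 1) := by rw [prod_const, card_univ, Fintype.card_fin]
    _ ≤ ∏ i, prob (fun x => P.vertex {i} x = P.vertex {i} x₀) :=
      prod_le_prod (fun _ _ => by positivity) fun i _ => hgood i
    _ = prob fun x => ∀ i, P.vertex {i} x = P.vertex {i} x₀ := hprod.symm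

lemma isQuasirandomCell (hη : 0 < η) (hvertex : ∀ i, P.VertexGood i x₀)
    (hedge : ∀ s ∈ edges, P.EdgeGood s x₀) :
    IsQuasirandomCell (fun i x => P.vertex {i} x = P.vertex {i} x₀)
      (fun s x => P.edge s x = P.edge s x₀) (fun s => P.edgeDensity s (P.edge s x₀) x₀)
      (2 * edgeTolerance η M * prob fun x => ∀ i, P.vertex {i} x = P.vertex {i} x₀) where
  dependsOn_vertex i := P.dependsOn_vertex_eq i _
  dependsOn_edge s := P.dependsOn_edge_eq s _
  density_mem_Icc s := condAvg_mem_Icc _ (fun _ => ind_mem_Icc _) _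
  abs_sub_le s hs Y hYsplit hY := by
    let R (x : ∀ i, V i) : Prop := ∀ i ∈ sᶜ, P.vertex {i} x = P.vertex {i} x₀
    have hR : DependsOn R (s : Set (Fin 4))ᶜ := dependsOn_forall_mem fun i hi =>
      (P.dependsOn_vertex_eq i _).mono (by simpa using hi)
    have hcell (x) : joint (boundary s) P.vertex x = joint (boundary s) P.vertex x₀ ∧ R x ↔
        ∀ i, P.vertex {i} x = P.vertex {i} x₀ := by
      rw [joint_eq_iff, boundary_of_mem_edges hs, forall_mem_image, ← forall_mem_union,
        union_compl]
      simp
    have hcount := abs_prob_and_sub_le_of_isPseudorandom (P.dependsOn_edge_eq s (P.edge s x₀))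
      (P.dependsOn_joint_vertex s) (P.dependsOn_joint_fineVertex s)
      (P.edge_regular.isPseudorandom (s, ⟨P.edge s x₀, P.face_regular.coarse.lt s x₀⟩))
      (hedge s hs).2 hR hYsplit fun x hx => (hcell x).2 (hY x hx)
    rw [prob_congr hcell] at hcount
    refine hcount.trans ?_
    linarith [mul_le_mul_of_nonneg_left (P.pow_four_le_prob_vertices hη.le hvertex)
      (edgeTolerance_pos hη M).le]

lemma le_prob_forall_cell_not_exceptional (hη : 0 < η) (hgood : ∀ e, P.Cleaned e x₀) :
    (η / (M + 1)) ^ 6 / 4 * (η / (L + 1)) ^ 4 ≤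
      prob fun x => ∀ e, P.faceColors e x = P.faceColors e x₀ ∧ ¬P.Exceptional e x := by
  have hvertex (i : Fin 4) : P.VertexGood i x₀ := by
    obtain ⟨e, he⟩ := exists_ne i
    exact (hgood e).2.1 i (by simpa using he.symm)
  have hedge (s) (hs : s ∈ edges) : P.EdgeGood s x₀ := by
    obtain ⟨e, he⟩ := exists_mem_boundary_of_mem_edges hs
    exact (hgood e).2.2.1 s he
  have hcount := (P.isQuasirandomCell hη hvertex hedge).le_prob_forall_faceCell_and_not
    P.dependsOn_exceptional (θ := η / (M + 1)) (fun e => ?_) (by positivity)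
    (fun s hs => (hedge s hs).1) (by rw [edgeTolerance]; exact le_of_eq (by ring))
  · simp only [faceColors_eq_iff]
    refine le_trans ?_ hcount
    gcongr
    exact P.pow_four_le_prob_vertices hη.le hvertex
  · have haverage := expect_mul_ind_cell (P.faceColors e) (fun y => ind (P.Exceptional e y)) x₀
    simp only [← ind_and, faceColors_eq_iff] at haverage
    refine haverage.trans_le (mul_le_mul_of_nonneg_right (hgood e).2.2.2.2 (prob_nonneg _))

lemma le_prob_forall_of_cleaned (hE : ∀ e, DependsOn (E e) {e}ᶜ) (hη : η ∈ Set.Ioc (0 : ℝ) 1)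
    (hδ : 0 ≤ δ) (hδ_le : δ ≤ faceTolerance η M L) (hgood : ∀ e, P.Cleaned e x₀) :
    δ ≤ prob fun x => ∀ e, E e x := by
  let H (e : Fin 4) (x : ∀ i, V i) : Prop :=
    P.faceColors e x = P.faceColors e x₀ ∧ ¬P.Exceptional e x
  have hH (e : Fin 4) : DependsOn (H e) {e}ᶜ := fun x y h => by
    simp only [H, P.dependsOn_faceColors e h, P.dependsOn_exceptional e h]
  have hstep (e : Fin 4) (Y : (∀ i, V i) → Prop) (hY : SplitsOver {e}ᶜ Y) :
      η / 2 * prob (fun x => Y x ∧ H e x) - δ ≤ prob (fun x => Y x ∧ E e x) :=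
    mul_prob_and_sub_le_of_isPseudorandom (g := P.fineFaceDensity e) (by simpa using hE e)
      (by simpa using P.dependsOn_fineFaceDensity e)
      (condAvg_nonneg _ fun _ => ind_nonneg _)
      (fun x hx => P.half_le_fineFaceDensity (hgood e).2.2.2 hx.1 hx.2)
      (P.face_regular.isPseudorandom e) hY
  have hreplace := pow_card_mul_prob_forall_sub_le hE hH
    ⟨(half_pos hη.1).le, by linarith [hη.2]⟩ hδ hstep univ
  simp only [card_univ, Fintype.card_fin, piecewise_univ, Nat.cast_ofNat] at hreplace
  have hcell := mul_le_mul_of_nonneg_left (P.le_prob_forall_cell_not_exceptional hη.1 hgood)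
    (pow_nonneg (half_pos hη.1).le 4)
  rw [faceTolerance] at hδ_le
  linarith

end RegularPartition

lemma tetrahedron_removal {ε : ℝ} (hε : 0 < ε) :
    ∃ ρ > 0, ∀ (V : Fin 4 → Type u) [∀ i, Fintype (V i)] [∀ i, Nonempty (V i)]
      (E : Fin 4 → (∀ i, V i) → Prop), (∀ e, DependsOn (E e) {e}ᶜ) →
      prob (fun x => ∀ e, E e x) < ρ →
      ∃ E' : Fin 4 → (∀ i, V i) → Prop, (∀ e, DependsOn (E' e) {e}ᶜ) ∧
        (∀ e, prob (fun x => E e x ∧ ¬E' e x) ≤ ε) ∧ ∀ x, ¬∀ e, E' e x := by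
  have hη : min (ε / 11) 1 ∈ Set.Ioc (0 : ℝ) 1 := ⟨by positivity, min_le_right _ _⟩
  obtain ⟨ρ, hρ, hpartition⟩ := exists_regularPartition.{u} hη.1
  refine ⟨ρ, hρ, fun V _ _ E hE hfew => ?_⟩
  obtain ⟨δ, M, L, hρδ, hδ, ⟨P⟩⟩ := hpartition V E
  refine ⟨P.Cleaned, P.dependsOn_cleaned hE, fun e => ?_, fun x₀ hx₀ => ?_⟩
  · linarith [P.prob_and_not_cleaned_le hη.1 e, min_le_left (ε / 11) 1]
  · linarith [P.le_prob_forall_of_cleaned hE hη (hρ.le.trans hρδ) hδ hx₀]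

end Removal

section Progressions

universe u

variable {G : Type u} [AddCommGroup G]

/-- The term `a + e • d` of the progression attached to `x`, which has first term
`a = -∑ i, i • x i` and common difference `d = ∑ i, x i`. The coefficient of `x e` vanishes. -/
def progressionTerm (x : Fin 4 → G) (e : Fin 4) : G := ∑ i : Fin 4, ((e : ℤ) - i) • x i

lemma progressionTerm_eq_add_nsmul (x : Fin 4 → G) (e : Fin 4) :
    progressionTerm x e = progressionTerm x 0 + (e : ℕ) • ∑ i, x i := by
  simp only [progressionTerm, sub_smul, sum_sub_distrib, ← smul_sum, Fin.val_zero, Nat.cast_zero,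
    zero_smul, natCast_zsmul, sum_const_zero]
  abel

lemma dependsOn_progressionTerm (e : Fin 4) :
    DependsOn (fun x : Fin 4 → G => progressionTerm x e) {e}ᶜ := by
  refine fun x y h => sum_congr rfl fun i _ => ?_
  rcases eq_or_ne i e with rfl | hi
  · simp only [sub_self, zero_smul]
  · rw [h i hi]

/-- The change of coordinates on `Fin 4 → G` whose first two new coordinates are the first term and
the common difference of the progression attached to a point. -/
def progressionEquiv : (Fin 4 → G) ≃ (G × G) × (G × G) where
  toFun x := ((progressionTerm x 0, ∑ i, x i), (x 2, x 3))
  invFun p := ![p.1.2 + p.1.1 + p.2.1 + 2 • p.2.2, -p.1.1 - 2 • p.2.1 - 3 • p.2.2, p.2.1, p.2.2]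
  left_inv x := by
    ext i
    fin_cases i <;> simp [progressionTerm, Fin.sum_univ_four] <;> module
  right_inv p := by
    obtain ⟨⟨a, d⟩, y, z⟩ := p
    ext <;> simp [progressionTerm, Fin.sum_univ_four] <;> module

variable [Fintype G]

lemma card_filter_progression (Q : G × G → Prop) [DecidablePred Q] :
    #{x : Fin 4 → G | Q (progressionTerm x 0, ∑ i, x i)} = #{p | Q p} * Fintype.card G ^ 2 := by
  rw [sq, ← Fintype.card_prod, ← card_univ, ← card_product]
  exact card_equiv progressionEquiv fun x => by simp [progressionEquiv]

lemma card_sum_eq_zero_and_mul_card_le {I : Type*} [Fintype I] [DecidableEq I] [DecidableEq G]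
    {e : I} {P : (I → G) → Prop} [DecidablePred P] (hP : DependsOn P {e}ᶜ) :
    #{x | ∑ i, x i = 0 ∧ P x} * Fintype.card G ≤ #{x | P x} := by
  rw [← card_univ, ← card_product]
  refine card_le_card_of_injOn (fun p => update p.1 e p.2) (fun p hp => ?_) ?_
  · have hagree : P (update p.1 e p.2) = P p.1 := hP fun i hi => update_of_ne hi _ _
    simp_all
  · rintro ⟨x, t⟩ hx ⟨y, t'⟩ hy hxy
    have hoff (i : I) (hi : i ≠ e) : x i = y i := by
      simpa only [update_of_ne hi] using congrFun hxy i
    have hsum : ∑ i, x i = ∑ i, y i := by simp_all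
    have hat : x e = y e := by
      rw [← add_sum_erase _ _ (mem_univ e), ← add_sum_erase _ y (mem_univ e),
        sum_congr rfl fun i hi => hoff i (ne_of_mem_erase hi)] at hsum
      exact add_right_cancel hsum
    have ht : t = t' := by simpa only [update_self] using congrFun hxy e
    exact Prod.ext (funext fun i => (eq_or_ne i e).elim (fun hi => hi ▸ hat) (hoff i)) ht

/-- Every `a ∈ A` gives the degenerate progressions `a, a, a, a`, each of which loses a term; a lost
term is counted once for each value of the coordinate on which it does not depend. -/
lemma card_div_card_le_sum_prob (A : Finset G) {E : Fin 4 → (Fin 4 → G) → Prop}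
    (hE : ∀ e, DependsOn (E e) {e}ᶜ) (hempty : ∀ x, ¬∀ e, E e x) :
    #A / (Fintype.card G : ℝ) ≤ ∑ e, prob fun x => progressionTerm x e ∈ A ∧ ¬E e x := by
  classical
  let lost (e : Fin 4) (x : Fin 4 → G) : Prop := progressionTerm x e ∈ A ∧ ¬E e x
  have hlost (e : Fin 4) : DependsOn (lost e) {e}ᶜ := fun x y h => by
    simp only [lost, dependsOn_progressionTerm e h, hE e h]
  have hdegenerate : #A * Fintype.card G ^ 2 ≤ ∑ e, #{x | ∑ i, x i = 0 ∧ lost e x} := by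
    have hA : #{p : G × G | p.1 ∈ A ∧ p.2 = 0} = #A := by
      rw [← mul_one #A, ← card_singleton (0 : G), ← card_product]
      congr 1 with p
      simp only [mem_filter_univ, mem_product, mem_singleton]
    rw [← hA, ← card_filter_progression]
    refine (card_le_card fun x hx => ?_).trans card_biUnion_le
    obtain ⟨e, he⟩ := not_forall.1 (hempty x)
    have hterm := progressionTerm_eq_add_nsmul x e
    simp_all only [mem_filter_univ, mem_biUnion, mem_univ, true_and, nsmul_zero, add_zero]
    exact ⟨e, hterm ▸ hx.1, he⟩
  have hcount : #A * Fintype.card G ^ 3 ≤ ∑ e, #{x | lost e x} :=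
    calc #A * Fintype.card G ^ 3
      _ = #A * Fintype.card G ^ 2 * Fintype.card G := by ring
      _ ≤ ∑ e, #{x | ∑ i, x i = 0 ∧ lost e x} * Fintype.card G := by
        rw [← sum_mul]
        exact Nat.mul_le_mul_right _ hdegenerate
      _ ≤ ∑ e, #{x | lost e x} :=
        sum_le_sum fun e _ => card_sum_eq_zero_and_mul_card_le (hlost e)
  have hG : (0 : ℝ) < Fintype.card G := by exact_mod_cast Fintype.card_pos
  simp only [prob_eq_card_div]
  rw [← sum_div, Fintype.card_fun, Fintype.card_fin, Nat.cast_pow,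
    div_le_div_iff₀ hG (pow_pos hG 4), pow_succ _ 3, ← mul_assoc]
  gcongr
  exact_mod_cast hcount

lemma exists_mul_sq_le_card_progressions {ε : ℝ} (hε : 0 < ε) :
    ∃ ρ > (0 : ℝ), ∀ (G : Type u) [AddCommGroup G] [Fintype G] [DecidableEq G] (A : Finset G),
      4 * ε * Fintype.card G < #A →
      ρ * Fintype.card G ^ 2 ≤ #{p : G × G | ∀ e : Fin 4, p.1 + (e : ℕ) • p.2 ∈ A} := by
  obtain ⟨ρ, hρ, hremoval⟩ := tetrahedron_removal.{u} hε
  refine ⟨ρ, hρ, fun G _ _ _ A hA => ?_⟩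
  have hG : (0 : ℝ) < Fintype.card G := by exact_mod_cast Fintype.card_pos
  have hmany : ρ ≤ prob fun x : Fin 4 → G => ∀ e, progressionTerm x e ∈ A := by
    by_contra! hfew
    obtain ⟨E, hE, hclose, hempty⟩ := hremoval (fun _ => G) (fun e x => progressionTerm x e ∈ A)
      (fun e x y h => congrArg (· ∈ A) (dependsOn_progressionTerm e h)) hfew
    have hsum := (card_div_card_le_sum_prob A hE hempty).trans (sum_le_sum fun e _ => hclose e)
    rw [sum_const, card_univ, Fintype.card_fin, nsmul_eq_mul, Nat.cast_ofNat,
      div_le_iff₀ hG] at hsum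
    exact hA.not_ge hsum
  have hcard : #{x : Fin 4 → G | ∀ e, progressionTerm x e ∈ A} =
      #{p : G × G | ∀ e : Fin 4, p.1 + (e : ℕ) • p.2 ∈ A} * Fintype.card G ^ 2 := by
    rw [← card_filter_progression]
    refine congrArg card (filter_congr fun x _ => forall_congr' fun e => ?_)
    rw [progressionTerm_eq_add_nsmul x e]
  rw [prob_eq_card_div, hcard, Fintype.card_fun, Fintype.card_fin,
    le_div_iff₀ (by positivity)] at hmany
  push_cast at hmany
  refine le_of_mul_le_mul_right ?_ (pow_pos hG 2)
  linarith

end Progressions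

section Transfer

variable {n m : ℕ} {A : Finset ℕ}

lemma mem_fourAPs_of_add_eq_two_mul (hA : A ⊆ Icc 1 n) {a₀ a₁ a₂ a₃ : ℕ} (h₀ : a₀ ∈ A)
    (h₁ : a₁ ∈ A) (h₂ : a₂ ∈ A) (h₃ : a₃ ∈ A) (hlt : a₀ < a₁) (h₀₂ : a₀ + a₂ = 2 * a₁)
    (h₁₃ : a₁ + a₃ = 2 * a₂) : (a₀, a₁ - a₀) ∈ fourAPs n A := by
  obtain ⟨d, rfl⟩ := Nat.exists_eq_add_of_le hlt.le
  obtain rfl : a₂ = a₀ + 2 * d := by lia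
  obtain rfl : a₃ = a₀ + 3 * d := by lia
  have hbound := mem_Icc.1 (hA h₁)
  simp only [fourAPs, mem_filter, mem_product, mem_Icc, Nat.add_sub_cancel_left]
  exact ⟨⟨mem_Icc.1 (hA h₀), by lia⟩, h₀, h₁, h₂, h₃⟩

lemma card_image_natCast (hA : A ⊆ Icc 1 n) (hm : n < m) :
    #(A.image ((↑) : ℕ → ZMod m)) = #A :=
  card_image_of_injOn <| (CharP.natCast_injOn_Iio (ZMod m) m).mono fun _ ha =>
    (mem_Icc.1 (hA ha)).2.trans_lt hm

lemma exists_lift_of_mem_image_natCast (hA : A ⊆ Icc 1 n) (hm : 2 * n < m) {z d : ZMod m}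
    (hzd : ∀ e : Fin 4, z + (e : ℕ) • d ∈ A.image ((↑) : ℕ → ZMod m)) :
    ∃ a : Fin 4 → ℕ, (∀ e, a e ∈ A) ∧ (∀ e, (a e : ZMod m) = z + (e : ℕ) • d) ∧
      a 0 + a 2 = 2 * a 1 ∧ a 1 + a 3 = 2 * a 2 := by
  choose a ha hcast using fun e => mem_image.1 (hzd e)
  have hle (e : Fin 4) : a e ≤ n := (mem_Icc.1 (hA (ha e))).2
  have hmid (i j k : Fin 4) (hijk : (i : ℕ) + k = 2 * j) : a i + a k = 2 * a j := by
    have hi := hle i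
    have hj := hle j
    have hk := hle k
    refine CharP.natCast_injOn_Iio (ZMod m) m (Set.mem_Iio.2 (by lia)) (Set.mem_Iio.2 (by lia)) ?_
    have hindex : ((i : ℕ) : ZMod m) + (k : ℕ) = 2 * (j : ℕ) := by exact_mod_cast congrArg _ hijk
    simp only [Nat.cast_add, Nat.cast_mul, Nat.cast_ofNat, hcast, nsmul_eq_mul]
    linear_combination d * hindex
  exact ⟨a, ha, hcast, hmid 0 1 2 rfl, hmid 1 2 3 rfl⟩

lemma card_progressions_image_natCast_le [NeZero m] (hA : A ⊆ Icc 1 n) (hm : 2 * n < m) :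
    #{p : ZMod m × ZMod m | ∀ e : Fin 4, p.1 + (e : ℕ) • p.2 ∈ A.image ((↑) : ℕ → ZMod m)} ≤
      m + 2 * #(fourAPs n A) := by
  let constant : Finset (ZMod m × ZMod m) := univ.image fun z => (z, 0)
  let increasing : Finset (ZMod m × ZMod m) := (fourAPs n A).image fun p => (p.1, p.2)
  let decreasing : Finset (ZMod m × ZMod m) :=
    (fourAPs n A).image fun p => (p.1 + 3 * p.2, -p.2)
  have hcover : ({p : ZMod m × ZMod m | ∀ e : Fin 4,
      p.1 + (e : ℕ) • p.2 ∈ A.image ((↑) : ℕ → ZMod m)} : Finset _) ⊆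
      constant ∪ (increasing ∪ decreasing) := by
    rintro ⟨z, d⟩ hzd
    obtain ⟨a, ha, hcast, h₀₂, h₁₃⟩ := exists_lift_of_mem_image_natCast hA hm (by simpa using hzd)
    have hz : z = a 0 := by simp [hcast]
    have hd : d = a 1 - a 0 := by simp [hcast]
    simp only [mem_union, constant, increasing, decreasing, mem_image]
    rcases lt_trichotomy (a 0) (a 1) with hlt | heq | hgt
    · exact Or.inr (Or.inl ⟨_, mem_fourAPs_of_add_eq_two_mul hA (ha 0) (ha 1) (ha 2) (ha 3) hlt
        h₀₂ h₁₃, by rw [hz, hd, Nat.cast_sub hlt.le]⟩)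
    · exact Or.inl ⟨z, mem_univ z, by rw [hd, heq, sub_self]⟩
    · refine Or.inr (Or.inr ⟨_, mem_fourAPs_of_add_eq_two_mul hA (ha 3) (ha 2) (ha 1) (ha 0)
        (by lia) (by lia) (by lia), ?_⟩)
      rw [Nat.cast_sub (by lia), hcast 2, hcast 3]
      ext <;> simp <;> ring
  have hconstant : #constant ≤ m := card_image_le.trans_eq (by rw [card_univ, ZMod.card])
  calc _ ≤ #constant + (#increasing + #decreasing) :=
        (card_le_card hcover).trans ((card_union_le _ _).trans (by gcongr; exact card_union_le _ _))
    _ ≤ m + (#(fourAPs n A) + #(fourAPs n A)) := by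
        gcongr <;> exact card_image_le
    _ = m + 2 * #(fourAPs n A) := by rw [two_mul]

end Transfer

end Varnavides

/-- Varnavides' theorem for 4APs. -/
theorem stmt_3 (α : ℝ) (hα : 0 < α) :
    ∃ n₀ : ℕ, ∃ g : ℝ, 0 < g ∧
      ∀ n : ℕ, n₀ ≤ n → ∀ A ⊆ Finset.Icc 1 n, α * n ≤ A.card →
        g * n ^ 2 ≤ ((fourAPs n A).card : ℝ) := by
  obtain ⟨ρ, hρ, hprogressions⟩ :=
    Varnavides.exists_mul_sq_le_card_progressions (by positivity : 0 < α / 16)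
  obtain ⟨n₁, hn₁⟩ := exists_nat_ge (3 / (2 * ρ))
  refine ⟨n₁ + 1, ρ, hρ, fun n hn A hA hcard => ?_⟩
  have hn1 : (1 : ℝ) ≤ n := by exact_mod_cast (Nat.le_add_left 1 n₁).trans hn
  have hnρ : 3 ≤ 2 * ρ * n :=
    (div_le_iff₀' (by positivity)).1 (hn₁.trans (by exact_mod_cast (Nat.le_succ n₁).trans hn))
  have hdense : 4 * (α / 16) * Fintype.card (ZMod (2 * n + 1)) <
      (A.image ((↑) : ℕ → ZMod (2 * n + 1))).card := by
    rw [ZMod.card, Varnavides.card_image_natCast hA (by lia)]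
    push_cast
    nlinarith
  have hmany := hprogressions (ZMod (2 * n + 1)) _ hdense
  have hfew := Varnavides.card_progressions_image_natCast_le hA (Nat.lt_succ_self (2 * n))
  have hbound := hmany.trans (Nat.cast_le.2 hfew)
  rw [ZMod.card] at hbound
  push_cast at hbound
  nlinarith
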